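/- Let k ≥ 4 be an integer and let G be a 3-connected k-regular graph. Suppose u and v are non-adjacent vertices and v has two non-adjacent neighbours w1, w2, neither of which is adjacent to u. Then the set of proper k-colourings of G forms a single Kempe class. -/

import Mathlib

open SimpleGraph
open scoped Classical

variable {V : Type*}

/-- A proper `k`-colouring of `G`. -/
def IsProperColoring (G : SimpleGraph V) (k : ℕ) (c : V → Fin k) : Prop :=
  ∀ ⦃u v : V⦄, G.Adj u v → c u ≠ c v

/-- `c'` is obtained from `c` by a single Kempe change: the colours `a` and `b` are
swapped on the connected component (of the subgraph induced by the vertices coloured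
`a` or `b`) containing `v0`, and all other vertices keep their colour. -/

def KempeStep (G : SimpleGraph V) (k : ℕ) (c c' : V → Fin k) : Prop :=
  ∃ a b : Fin k, ∃ v0 : {x : V | c x = a ∨ c x = b},
    ∀ v : V, c' v =
      if h : c v = a ∨ c v = b then
        if (G.induce {x : V | c x = a ∨ c x = b}).Reachable v0 ⟨v, h⟩
          then Equiv.swap a b (c v) else c v
      else c v

/-- Two colourings are Kempe equivalent if one is obtained from the other by a finite
sequence of Kempe changes. -/
def KempeEquiv (G : SimpleGraph V) (k : ℕ) (c c' : V → Fin k) : Prop :=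
  Relation.ReflTransGen (KempeStep G k) c c'

/-- The set of all proper `k`-colourings of `G` forms a single Kempe class. -/
def KempeClass (G : SimpleGraph V) (k : ℕ) : Prop :=
  ∀ c c' : V → Fin k, IsProperColoring G k c → IsProperColoring G k c' →
    KempeEquiv G k c c'

/-- `G` is `d`-degenerate: every nonempty set of vertices contains a vertex with at
most `d` neighbours inside the set. -/
def Degenerate (G : SimpleGraph V) (d : ℕ) : Prop :=
  ∀ S : Set V, S.Nonempty → ∃ v ∈ S, (S ∩ G.neighborSet v).ncard ≤ d

/-- `G` is 3-connected: more than 3 vertices, and deleting any at most 2 vertices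
leaves it connected. -/
def ThreeConnected [Fintype V] (G : SimpleGraph V) : Prop :=
  3 < Fintype.card V ∧ ∀ S : Set V, S.ncard ≤ 2 → (G.induce Sᶜ).Connected

/-!
Call a colouring alike on two vertices if it gives them the same colour. Identifying two
non-adjacent neighbours of a vertex `m` makes `G` a `(k - 1)`-degenerate graph, because a subgraph
of minimum degree `k` would, by 3-connectedness, contain `m`, whose degree has dropped. Hence all
colourings alike on these two vertices are equivalent.

By the pigeonhole principle every colouring `α` is alike on two neighbours `x`, `y` of `u`.
Suppose that `α` is not equivalent to a colouring `γ` that is alike on `w₁`, `w₂`. Then no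
colouring is alike on both pairs, so some set `D` cannot be coloured once `x`, `y` have received
one colour and `w₁`, `w₂` another. Among all such situations take one with `D` as small as
possible. Counting degrees and using 3-connectedness again, `D` turns out to be a clique on
`k - 1` vertices, each of which is joined to exactly one of `x`, `y`, to exactly one of `w₁`, `w₂`,
and to nothing else outside `D`. Around such a clique there is enough room, as `k ≥ 4`, to recolour
`α` and `γ` until both are alike on a common pair with a common neighbour, so they are equivalent
after all.
-/

section Swap

variable {k : ℕ} {G : SimpleGraph V} {c c' : V → Fin k} {a b : Fin k} {F : Set V}

theorem IsProperColoring.mono {H : SimpleGraph V} (hHG : H ≤ G) (hc : IsProperColoring G k c) :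
    IsProperColoring H k c :=
  fun _ _ h => hc (hHG h)

theorem IsProperColoring.update {z : V} {x : Fin k}
    (hc : IsProperColoring (G.deleteIncidenceSet z) k c)
    (hx : ∀ t ∈ G.neighborSet z, c t ≠ x) : IsProperColoring G k (Function.update c z x) := by
  intro v t hvt
  rcases eq_or_ne v z with rfl | hv
  · rw [Function.update_self, Function.update_of_ne hvt.ne']
    exact (hx t hvt).symm
  rcases eq_or_ne t z with rfl | ht
  · rw [Function.update_self, Function.update_of_ne hv]
    exact hx v hvt.symm
  · rw [Function.update_of_ne hv, Function.update_of_ne ht]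
    exact hc (G.deleteIncidenceSet_adj.2 ⟨hvt, hv, ht⟩)

/-- The colouring obtained from `c` by exchanging the colours `a` and `b` on the set `F`. -/
noncomputable def swapOn (c : V → Fin k) (a b : Fin k) (F : Set V) : V → Fin k :=
  F.piecewise (Equiv.swap a b ∘ c) c

/-- Two proper colourings of `G` differ by exchanging two colours on some set of vertices. That set
need not be a single two-coloured component, so these moves are easier to exhibit than Kempe
changes; they generate the same equivalence relation. -/
def IsSwap (G : SimpleGraph V) (c c' : V → Fin k) : Prop :=
  IsProperColoring G k c ∧ IsProperColoring G k c' ∧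
    ∃ a b, ∀ v, c' v = c v ∨ c' v = Equiv.swap a b (c v)

/-- The equivalence relation on proper colourings generated by `IsSwap`. -/
def SwapEquiv (G : SimpleGraph V) (c c' : V → Fin k) : Prop :=
  Relation.ReflTransGen (IsSwap G) c c'

theorem swapOn_of_mem {v : V} (hv : v ∈ F) : swapOn c a b F v = Equiv.swap a b (c v) :=
  Set.piecewise_eq_of_mem _ _ _ hv

theorem swapOn_of_notMem {v : V} (hv : v ∉ F) : swapOn c a b F v = c v :=
  Set.piecewise_eq_of_notMem _ _ _ hv

theorem isSwap_swapOn (hc : IsProperColoring G k c)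
    (hF : ∀ v ∈ F, ∀ t ∉ F, G.Adj v t → c t ≠ Equiv.swap a b (c v)) :
    IsSwap G c (swapOn c a b F) := by
  refine ⟨hc, fun v t hvt => ?_, a, b, fun v => ?_⟩
  · by_cases hv : v ∈ F <;> by_cases ht : t ∈ F <;>
      simp only [swapOn_of_mem, swapOn_of_notMem, hv, ht, not_false_eq_true]
    · exact (Equiv.swap a b).injective.ne (hc hvt)
    · exact (hF v hv t ht hvt).symm
    · exact hF t ht v hv hvt.symm
    · exact hc hvt
  · by_cases hv : v ∈ F
    · exact .inr (swapOn_of_mem hv)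
    · exact .inl (swapOn_of_notMem hv)

theorem isSwap_of_forall_ne {z : V} (hc : IsProperColoring G k c) (hc' : IsProperColoring G k c')
    (h : ∀ v ≠ z, c v = c' v) : IsSwap G c c' := by
  refine ⟨hc, hc', c z, c' z, fun v => ?_⟩
  rcases eq_or_ne v z with rfl | hv
  · exact .inr (Equiv.swap_apply_left _ _).symm
  · exact .inl (h v hv).symm

theorem isSwap_update {z : V} {x : Fin k} (hc : IsProperColoring G k c)
    (hx : ∀ t ∈ G.neighborSet z, c t ≠ x) : IsSwap G c (Function.update c z x) :=
  isSwap_of_forall_ne hc ((hc.mono (G.deleteIncidenceSet_le z)).update hx)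
    fun _ hv => (Function.update_of_ne hv _ _).symm

theorem IsSwap.symm (h : IsSwap G c c') : IsSwap G c' c := by
  obtain ⟨hc, hc', a, b, hab⟩ := h
  refine ⟨hc', hc, a, b, fun v => ?_⟩
  rcases hab v with hv | hv
  · exact .inl hv.symm
  · exact .inr (by rw [hv, Equiv.swap_apply_self])

theorem IsSwap.swapEquiv (h : IsSwap G c c') : SwapEquiv G c c' :=
  Relation.ReflTransGen.single h

theorem SwapEquiv.trans {c'' : V → Fin k} (h : SwapEquiv G c c') (h' : SwapEquiv G c' c'') :
    SwapEquiv G c c'' :=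
  Relation.ReflTransGen.trans h h'

theorem SwapEquiv.symm (h : SwapEquiv G c c') : SwapEquiv G c' c :=
  have : Std.Symm (IsSwap (k := k) G) := ⟨fun _ _ => IsSwap.symm⟩
  Relation.ReflTransGen.stdSymm.symm _ _ h

theorem SwapEquiv.isProperColoring (h : SwapEquiv G c c') (hc : IsProperColoring G k c) :
    IsProperColoring G k c' := by
  induction h with
  | refl => exact hc
  | tail _ h => exact h.2.1

/-- The vertices joined to `v₀` by a path of vertices coloured `a` or `b`. -/
def kempeChain (G : SimpleGraph V) (c : V → Fin k) (a b : Fin k)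
    (v₀ : {x : V | c x = a ∨ c x = b}) : Set V :=
  {v | ∃ h : c v = a ∨ c v = b, (G.induce {x | c x = a ∨ c x = b}).Reachable v₀ ⟨v, h⟩}

theorem mem_kempeChain_of_adj {v₀ : {x : V | c x = a ∨ c x = b}} {v t : V}
    (hv : v ∈ kempeChain G c a b v₀) (hvt : G.Adj v t) (ht : c t = a ∨ c t = b) :
    t ∈ kempeChain G c a b v₀ := by
  obtain ⟨h, hreach⟩ := hv
  exact ⟨ht, hreach.trans (Adj.reachable (G := G.induce {x | c x = a ∨ c x = b}) hvt)⟩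

theorem kempeChain_subset {v₀ : {x : V | c x = a ∨ c x = b}} {T : Set V} (hv₀ : ↑v₀ ∈ T)
    (hT : ∀ v ∈ T, ∀ t, G.Adj v t → c v = a ∨ c v = b → c t = a ∨ c t = b → t ∈ T) :
    kempeChain G c a b v₀ ⊆ T := by
  rintro v ⟨h, ⟨p⟩⟩
  by_contra hvT
  obtain ⟨e, -, he, he'⟩ := p.exists_boundary_dart (Subtype.val ⁻¹' T) hv₀ hvT
  exact he' (hT _ he _ e.adj e.fst.2 e.snd.2)

theorem kempeStep_swapOn_kempeChain (v₀ : {x : V | c x = a ∨ c x = b}) :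
    KempeStep G k c (swapOn c a b (kempeChain G c a b v₀)) := by
  refine ⟨a, b, v₀, fun v => ?_⟩
  by_cases hv : v ∈ kempeChain G c a b v₀
  · obtain ⟨h, hreach⟩ := id hv
    rw [swapOn_of_mem hv, dif_pos h, if_pos hreach]
  · rw [swapOn_of_notMem hv]
    split_ifs with h hreach
    · exact absurd ⟨h, hreach⟩ hv
    · rfl
    · rfl

theorem isSwap_swapOn_kempeChain (hc : IsProperColoring G k c)
    (v₀ : {x : V | c x = a ∨ c x = b}) : IsSwap G c (swapOn c a b (kempeChain G c a b v₀)) := by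
  refine isSwap_swapOn hc fun v hv t ht hvt hct => ht (mem_kempeChain_of_adj hv hvt ?_)
  obtain ⟨hva | hvb, -⟩ := hv
  · exact .inr (by rw [hct, hva, Equiv.swap_apply_left])
  · exact .inl (by rw [hct, hvb, Equiv.swap_apply_right])

theorem kempeChain_subset_ne (hc : IsProperColoring G k c) (hc' : IsProperColoring G k c')
    (hab : ∀ v, c' v = c v ∨ c' v = Equiv.swap a b (c v)) {v₀ : {x : V | c x = a ∨ c x = b}}
    (hv₀ : c v₀ ≠ c' v₀) : kempeChain G c a b v₀ ⊆ {v | c v ≠ c' v} := by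
  refine kempeChain_subset hv₀ fun v hv t hvt hcv hct heq => hc' hvt ?_
  have hne := hc hvt
  rw [(hab v).resolve_left (Ne.symm hv), ← heq]
  rcases hcv with hcv | hcv <;> rcases hct with hct | hct <;> simp_all

/-- A swap is performed one chain at a time, each chain lying in the set where `c` and `c'`
differ. -/
theorem IsSwap.kempeEquiv [Finite V] (h : IsSwap G c c') : KempeEquiv G k c c' := by
  obtain ⟨hc, hc', a, b, hab⟩ := h
  induction hn : {v | c v ≠ c' v}.ncard using Nat.strong_induction_on generalizing c with
  | _ n ih =>
  by_cases hcc : c = c'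
  · exact hcc ▸ .refl
  obtain ⟨v₀, hv₀⟩ := Function.ne_iff.1 hcc
  have mem_ab : c v₀ = a ∨ c v₀ = b := by
    by_contra! hne
    exact hv₀ ((hab v₀).elim Eq.symm fun h =>
      (h.trans (Equiv.swap_apply_of_ne_of_ne hne.1 hne.2)).symm)
  set K := kempeChain G c a b ⟨v₀, mem_ab⟩
  have hK : K ⊆ {v | c v ≠ c' v} := kempeChain_subset_ne hc hc' hab hv₀
  have hswapK {v : V} (hv : v ∈ K) : swapOn c a b K v = c' v :=
    (swapOn_of_mem hv).trans ((hab v).resolve_left (hK hv).symm).symm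
  have hproper : IsProperColoring G k (swapOn c a b K) := (isSwap_swapOn_kempeChain hc _).2.1
  refine .head (kempeStep_swapOn_kempeChain _) (ih _ ?_ hproper (fun v => ?_) rfl)
  · rw [← hn]
    refine Set.ncard_lt_ncard
      ⟨fun v hv hvc => ?_, fun hsub => hsub hv₀ (hswapK ⟨mem_ab, .rfl⟩)⟩ (Set.toFinite _)
    exact hv (by rw [swapOn_of_notMem fun hvK => hK hvK hvc, hvc])
  · by_cases hv : v ∈ K
    · exact .inl (hswapK hv).symm
    · rw [swapOn_of_notMem hv]
      exact hab v

theorem SwapEquiv.kempeEquiv [Finite V] (h : SwapEquiv G c c') : KempeEquiv G k c c' := by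
  induction h with
  | refl => exact .refl
  | tail _ h ih => exact ih.trans h.kempeEquiv

end Swap

section Degenerate

variable {k : ℕ} {G : SimpleGraph V} {c c' d d' : V → Fin k} {z : V}

theorem exists_color_notMem {s : Set (Fin k)} (hs : s.ncard < k) : ∃ x, x ∉ s := by
  by_contra! h
  rw [Set.eq_univ_of_forall h, Set.ncard_univ, Nat.card_fin] at hs
  exact hs.false

theorem exists_color_forall_ne [Finite V] {S : Set V} (hS : S.ncard < k) (c : V → Fin k) :
    ∃ x, ∀ t ∈ S, c t ≠ x := by
  obtain ⟨x, hx⟩ := exists_color_notMem ((Set.ncard_image_le S.toFinite (f := c)).trans_lt hS)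
  exact ⟨x, fun t ht htx => hx ⟨t, ht, htx⟩⟩

/-- If the swap does not lift directly, `z` is first given a colour that is neither `a` nor `b` and
free at `z` both before and after. -/
theorem IsSwap.exists_lift [Finite V] (hz : (G.neighborSet z).ncard < k)
    (hdd' : IsSwap (G.deleteIncidenceSet z) d d') (hc : IsProperColoring G k c)
    (hcd : ∀ v ≠ z, c v = d v) : ∃ c', SwapEquiv G c c' ∧ ∀ v ≠ z, c' v = d' v := by
  obtain ⟨-, hd', a, b, hab⟩ := hdd'
  obtain ⟨x, hx⟩ := exists_color_forall_ne hz d'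
  have eq_off (y : Fin k) (v : V) (hv : v ≠ z) : Function.update d' z y v = d' v :=
    Function.update_of_ne hv _ _
  have swap_update {e : V → Fin k} (he : IsProperColoring G k e) (hed : ∀ v ≠ z, e v = d v)
      {y : Fin k} (hy : ∀ t ∈ G.neighborSet z, d' t ≠ y)
      (hez : y = e z ∨ y = Equiv.swap a b (e z)) : SwapEquiv G e (Function.update d' z y) := by
    refine .single ⟨he, hd'.update hy, a, b, fun v => ?_⟩
    rcases eq_or_ne v z with rfl | hv
    · rwa [Function.update_self]
    · rw [eq_off _ _ hv, hed v hv]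
      exact hab v
  by_cases hcz : c z = a ∨ c z = b
  · by_cases hxab : x = a ∨ x = b
    · refine ⟨_, swap_update hc hcd hx ?_, eq_off x⟩
      rcases hcz with h | h <;> rcases hxab with rfl | rfl <;> simp [h]
    · push Not at hxab
      have hx' : ∀ t ∈ G.neighborSet z, c t ≠ x := by
        rintro t ht rfl
        apply hx t ht
        have hct := hcd t ht.ne'
        rcases hab t with h | h
        · rw [h, hct]
        · rw [h, ← hct, Equiv.swap_apply_of_ne_of_ne hxab.1 hxab.2]
      have hstep := isSwap_update hc hx'
      refine ⟨_, hstep.swapEquiv.trans (swap_update hstep.2.1 (fun v hv => ?_) hx (.inl ?_)),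
        eq_off x⟩
      · rw [Function.update_of_ne hv, hcd v hv]
      · rw [Function.update_self]
  · push Not at hcz
    refine ⟨_, swap_update hc hcd (fun t ht => ?_) (.inl rfl), eq_off (c z)⟩
    have hne : d t ≠ c z := hcd t ht.ne' ▸ hc ht.symm
    rcases hab t with h | h
    · rwa [h]
    · rw [h, ← Equiv.swap_apply_of_ne_of_ne hcz.1 hcz.2]
      exact (Equiv.swap a b).injective.ne hne

theorem SwapEquiv.exists_lift [Finite V] (hz : (G.neighborSet z).ncard < k)
    (hcd : SwapEquiv (G.deleteIncidenceSet z) c d) (hc : IsProperColoring G k c) :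
    ∃ c', SwapEquiv G c c' ∧ ∀ v ≠ z, c' v = d v := by
  induction hcd with
  | refl => exact ⟨c, .refl, fun _ _ => rfl⟩
  | tail _ hstep ih =>
    obtain ⟨c₁, hcc₁, hc₁⟩ := ih
    obtain ⟨c₂, hc₁c₂, hc₂⟩ := hstep.exists_lift hz (hcc₁.isProperColoring hc) hc₁
    exact ⟨c₂, hcc₁.trans hc₁c₂, hc₂⟩

theorem Degenerate.mono {H : SimpleGraph V} [Finite V] {n : ℕ} (hHG : H ≤ G)
    (hG : Degenerate G n) : Degenerate H n := by
  intro S hS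
  obtain ⟨v, hvS, hv⟩ := hG S hS
  exact ⟨v, hvS, (Set.ncard_le_ncard (Set.inter_subset_inter_right S fun _ h => hHG h)
    (Set.toFinite _)).trans hv⟩

theorem swapEquiv_of_degenerate_of_eqOn_compl [Finite V] {n : ℕ} (hG : Degenerate G n)
    (hn : n < k) {S : Set V} (hS : ∀ ⦃v t⦄, G.Adj v t → v ∈ S) (hc : IsProperColoring G k c)
    (hd : IsProperColoring G k d) (hcd : Set.EqOn c d Sᶜ) : SwapEquiv G c d := by
  induction hm : S.ncard using Nat.strong_induction_on generalizing G S d with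
  | _ m ih =>
  rcases S.eq_empty_or_nonempty with rfl | hSne
  · obtain rfl : c = d := funext fun v => hcd (by simp)
    exact .refl
  obtain ⟨z, hzS, hz⟩ := hG S hSne
  have hzdeg : (G.neighborSet z).ncard < k := by
    rw [Set.inter_eq_right.2 fun t ht => hS ht.symm] at hz
    lia
  have hle := G.deleteIncidenceSet_le z
  have hequiv : SwapEquiv (G.deleteIncidenceSet z) c (Function.update d z (c z)) := by
    refine ih _ (hm ▸ Set.ncard_sdiff_singleton_lt_of_mem hzS (Set.toFinite _)) (hG.mono hle)
      (fun v t hvt => ?_) (hc.mono hle) (fun v t hvt => ?_) (fun v hv => ?_) rfl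
    · have hadj := G.deleteIncidenceSet_adj.1 hvt
      exact ⟨hS hadj.1, hadj.2.1⟩
    · have hadj := G.deleteIncidenceSet_adj.1 hvt
      rw [Function.update_of_ne hadj.2.1, Function.update_of_ne hadj.2.2]
      exact hd hadj.1
    · rcases eq_or_ne v z with rfl | hvz
      · rw [Function.update_self]
      · rw [Function.update_of_ne hvz]
        exact hcd fun hvS => hv ⟨hvS, hvz⟩
  obtain ⟨e, hce, he⟩ := hequiv.exists_lift hzdeg hc
  refine hce.trans
    (isSwap_of_forall_ne (z := z) (hce.isProperColoring hc) hd fun v hv => ?_).swapEquiv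
  rw [he v hv, Function.update_of_ne hv]

/-- Las Vergnas and Meyniel. -/
theorem swapEquiv_of_degenerate [Finite V] {n : ℕ} (hG : Degenerate G n) (hn : n < k)
    (hc : IsProperColoring G k c) (hd : IsProperColoring G k d) : SwapEquiv G c d :=
  swapEquiv_of_degenerate_of_eqOn_compl hG hn (S := Set.univ) (fun _ _ _ => trivial) hc hd
    (by simp)

end Degenerate

section Obstruction

variable {k : ℕ} {G : SimpleGraph V} {c₀ : V → Fin k} {S D T : Set V} {z : V}

/-- The precolouring `c₀` of `S` can be continued to the vertices of `D`. Conflicts between two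
vertices of `S` are disregarded. -/
def ExtendsTo (G : SimpleGraph V) (c₀ : V → Fin k) (S D : Set V) : Prop :=
  ∃ c : V → Fin k, Set.EqOn c c₀ S ∧ ∀ z ∈ D, ∀ t ∈ S ∪ D, G.Adj z t → c z ≠ c t

/-- `D` is a minimal set to which the precolouring `c₀` of `S` does not extend. -/
def IsObstruction (G : SimpleGraph V) (c₀ : V → Fin k) (S D : Set V) : Prop :=
  Minimal (fun D => Disjoint S D ∧ ¬ ExtendsTo G c₀ S D) D

theorem exists_isObstruction [Finite V] (hSD : Disjoint S D) (h : ¬ ExtendsTo G c₀ S D) :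
    ∃ D', IsObstruction G c₀ S D' :=
  exists_minimal_of_wellFoundedLT _ ⟨D, hSD, h⟩

theorem IsObstruction.disjoint (hD : IsObstruction G c₀ S D) : Disjoint S D :=
  hD.prop.1

theorem IsObstruction.not_extendsTo (hD : IsObstruction G c₀ S D) : ¬ ExtendsTo G c₀ S D :=
  hD.prop.2

theorem IsObstruction.nonempty (hD : IsObstruction G c₀ S D) : D.Nonempty := by
  by_contra! h
  exact hD.not_extendsTo ⟨c₀, fun _ _ => rfl, by simp [h]⟩

theorem IsObstruction.extendsTo (hD : IsObstruction G c₀ S D) (hT : T ⊂ D) :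
    ExtendsTo G c₀ S T := by
  by_contra h
  exact hD.not_prop_of_lt hT ⟨hD.disjoint.mono_right hT.subset, h⟩

theorem IsObstruction.le_ncard_add_ncard [Finite V] (hD : IsObstruction G c₀ S D) (hz : z ∈ D) :
    k ≤ (c₀ '' (G.neighborSet z ∩ S)).ncard + (G.neighborSet z ∩ D).ncard := by
  by_contra! hlt
  obtain ⟨c, hcS, hc⟩ := hD.extendsTo (Set.sdiff_singleton_ssubset.2 hz)
  obtain ⟨x, hx⟩ : ∃ x, x ∉ c₀ '' (G.neighborSet z ∩ S) ∪ c '' (G.neighborSet z ∩ D) := by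
    refine exists_color_notMem ((Set.ncard_union_le _ _).trans_lt ?_)
    exact (Nat.add_le_add_left (Set.ncard_image_le (Set.toFinite _)) _).trans_lt hlt
  have hx' : ∀ t ∈ S ∪ D, G.Adj z t → c t ≠ x := by
    rintro t (ht | ht) hzt rfl
    · exact hx (.inl ⟨t, ⟨hzt, ht⟩, (hcS ht).symm⟩)
    · exact hx (.inr ⟨t, ⟨hzt, ht⟩, rfl⟩)
  have hzS : z ∉ S := fun h => hD.disjoint.notMem_of_mem_left h hz
  refine hD.not_extendsTo ⟨Function.update c z x, fun t ht => ?_, fun s hs t ht hst => ?_⟩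
  · rw [Function.update_of_ne (ne_of_mem_of_not_mem ht hzS), hcS ht]
  · rcases eq_or_ne s z with rfl | hsz
    · rw [Function.update_self, Function.update_of_ne hst.ne']
      exact (hx' t ht hst).symm
    rcases eq_or_ne t z with rfl | htz
    · rw [Function.update_self, Function.update_of_ne hsz]
      exact hx' s (.inr hs) hst.symm
    · rw [Function.update_of_ne hsz, Function.update_of_ne htz]
      exact hc s ⟨hs, hsz⟩ t (ht.imp_right fun h => ⟨h, htz⟩) hst

theorem IsObstruction.exists_adj_diff (hD : IsObstruction G c₀ S D) (hT : T.Nonempty)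
    (hTD : T ⊂ D) : ∃ z ∈ T, ∃ t ∈ D \ T, G.Adj z t := by
  by_contra! hsep
  obtain ⟨c₁, hc₁S, hc₁⟩ := hD.extendsTo hTD
  obtain ⟨c₂, hc₂S, hc₂⟩ := hD.extendsTo <|
    (Set.ssubset_iff_of_subset Set.sdiff_subset).2
      (hT.imp fun x hx => ⟨hTD.subset hx, fun h => h.2 hx⟩)
  have hST : Disjoint S T := hD.disjoint.mono_right hTD.subset
  have hpieceS {t : V} (ht : t ∈ S) : T.piecewise c₁ c₂ t = c₀ t := by
    rw [Set.piecewise_eq_of_notMem _ _ _ (hST.notMem_of_mem_left ht), hc₂S ht]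
  refine hD.not_extendsTo ⟨T.piecewise c₁ c₂, fun t => hpieceS, fun z hz t ht hzt => ?_⟩
  change T.piecewise c₁ c₂ z ≠ T.piecewise c₁ c₂ t
  by_cases hzT : z ∈ T
  · rw [Set.piecewise_eq_of_mem _ _ _ hzT]
    rcases ht with ht | ht
    · rw [hpieceS ht, ← hc₁S ht]
      exact hc₁ z hzT t (.inl ht) hzt
    · have htT : t ∈ T := by_contra fun htT => hsep z hzT t ⟨ht, htT⟩ hzt
      rw [Set.piecewise_eq_of_mem _ _ _ htT]
      exact hc₁ z hzT t (.inr htT) hzt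
  · rw [Set.piecewise_eq_of_notMem _ _ _ hzT]
    rcases ht with ht | ht
    · rw [hpieceS ht, ← hc₂S ht]
      exact hc₂ z ⟨hz, hzT⟩ t (.inl ht) hzt
    · have htT : t ∉ T := fun htT => hsep t htT z ⟨hz, hzT⟩ hzt.symm
      rw [Set.piecewise_eq_of_notMem _ _ _ htT]
      exact hc₂ z ⟨hz, hzT⟩ t (.inr ⟨ht, htT⟩) hzt

theorem exists_isProperColoring_of_degenerate [Finite V] {n : ℕ} (hG : Degenerate G n)
    (hn : n < k) : ∃ c, IsProperColoring G k c := by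
  by_cases hext : ExtendsTo G (fun _ => (⟨n, hn⟩ : Fin k)) ∅ Set.univ
  · obtain ⟨c, -, hc⟩ := hext
    exact ⟨c, fun v t => hc v trivial t (.inr trivial)⟩
  · obtain ⟨D, hD⟩ := exists_isObstruction (Set.empty_disjoint _) hext
    obtain ⟨z, hz, hdeg⟩ := hG D hD.nonempty
    have hle := hD.le_ncard_add_ncard hz
    rw [Set.inter_comm] at hdeg
    simp only [Set.inter_empty, Set.image_empty, Set.ncard_empty] at hle
    lia

section Regular

variable [Finite V] (hreg : ∀ z, (G.neighborSet z).ncard = k)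

include hreg

theorem IsObstruction.ncard_inter_add_ncard_inter_le (hD : IsObstruction G c₀ S D) (z : V) :
    (G.neighborSet z ∩ S).ncard + (G.neighborSet z ∩ D).ncard ≤ k := by
  have hdisj : Disjoint (G.neighborSet z ∩ S) (G.neighborSet z ∩ D) :=
    hD.disjoint.mono Set.inter_subset_right Set.inter_subset_right
  rw [← hreg z, ← Set.ncard_union_eq hdisj, ← Set.inter_union_distrib_left]
  exact Set.ncard_le_ncard Set.inter_subset_left

theorem IsObstruction.neighborSet_subset (hD : IsObstruction G c₀ S D) (hz : z ∈ D) :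
    G.neighborSet z ⊆ S ∪ D := by
  have hcard : (G.neighborSet z).ncard ≤ (G.neighborSet z ∩ (S ∪ D)).ncard := by
    rw [hreg, Set.inter_union_distrib_left, Set.ncard_union_eq
      (hD.disjoint.mono Set.inter_subset_right Set.inter_subset_right)]
    exact (hD.le_ncard_add_ncard hz).trans
      (Nat.add_le_add_right (Set.ncard_image_le (Set.toFinite _)) _)
  exact Set.inter_eq_left.1 (Set.eq_of_subset_of_ncard_le Set.inter_subset_left hcard)

theorem IsObstruction.injOn (hD : IsObstruction G c₀ S D) (hz : z ∈ D) :
    Set.InjOn c₀ (G.neighborSet z ∩ S) := by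
  refine Set.injOn_of_ncard_image_eq ((Set.ncard_image_le (Set.toFinite _)).antisymm ?_)
    (Set.toFinite _)
  have hle := hD.le_ncard_add_ncard hz
  have hge := hD.ncard_inter_add_ncard_inter_le hreg z
  lia

end Regular

end Obstruction

section Identify

variable {k : ℕ} {G : SimpleGraph V} {p q m : V} {c d : V → Fin k}

theorem ThreeConnected.mem_union_pair [Fintype V] (h3 : ThreeConnected G) {F : Set V}
    (hF : F.Nonempty) (hpq : Disjoint F {p, q})
    (hcl : ∀ a ∈ F, ∀ b, G.Adj a b → b ∈ F ∪ {p, q}) (z : V) : z ∈ F ∪ {p, q} := by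
  by_contra hz
  obtain ⟨a, ha⟩ := hF
  have hcard : ({p, q} : Set V).ncard ≤ 2 :=
    (Set.ncard_insert_le p {q}).trans (by rw [Set.ncard_singleton])
  obtain ⟨walk⟩ := (h3.2 {p, q} hcard).preconnected
    ⟨a, hpq.notMem_of_mem_left ha⟩ ⟨z, fun h => hz (.inr h)⟩
  obtain ⟨e, -, he, he'⟩ :=
    walk.exists_boundary_dart (Subtype.val ⁻¹' F) ha fun h => hz (.inl h)
  exact (hcl _ he _ e.adj).elim he' e.snd.2

/-- The graph obtained from `G` by identifying `q` with `p`, leaving `q` behind as an isolated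
vertex. -/
noncomputable def identify (G : SimpleGraph V) (p q : V) : SimpleGraph V :=
  G.map (Function.update id q p)

theorem update_id_eq_iff_of_ne {a z : V} (hz : z ≠ p) :
    Function.update id q p a = z ↔ a = z ∧ a ≠ q := by
  rcases eq_or_ne a q with rfl | ha
  · simp [hz.symm]
  · simp [ha]

theorem identify_adj_of_ne {z t : V} (hz : z ≠ p) (h : (identify G p q).Adj z t) :
    z ≠ q ∧ t ∈ Function.update id q p '' G.neighborSet z := by
  obtain ⟨-, a, b, hab, ha, rfl⟩ := h
  obtain ⟨rfl, haq⟩ := (update_id_eq_iff_of_ne hz).1 ha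
  exact ⟨haq, b, hab, rfl⟩

theorem image_update_id_subset_and_injOn [Finite V] {T : Set V} {z : V} (hz : z ≠ p)
    (hle : (G.neighborSet z).ncard ≤ (T ∩ (identify G p q).neighborSet z).ncard) :
    Function.update id q p '' G.neighborSet z ⊆ T ∧
      Set.InjOn (Function.update id q p) (G.neighborSet z) := by
  have hsub : T ∩ (identify G p q).neighborSet z ⊆ Function.update id q p '' G.neighborSet z :=
    fun t ht => (identify_adj_of_ne hz ht.2).2
  refine ⟨?_, Set.injOn_of_ncard_image_eq ((Set.ncard_image_le (Set.toFinite _)).antisymm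
    (hle.trans (Set.ncard_le_ncard hsub (Set.toFinite _)))) (Set.toFinite _)⟩
  rw [← Set.eq_of_subset_of_ncard_le hsub
    ((Set.ncard_image_le (Set.toFinite _)).trans hle) (Set.toFinite _)]
  exact Set.inter_subset_left

theorem pos_of_adj [Finite V] (hreg : ∀ z, (G.neighborSet z).ncard = k) (hmp : G.Adj m p) : 0 < k :=
  hreg m ▸ (Set.ncard_pos (Set.toFinite _)).2 ⟨p, hmp⟩

theorem degenerate_identify [Fintype V] (hreg : ∀ z, (G.neighborSet z).ncard = k)
    (h3 : ThreeConnected G) (hpq : p ≠ q) (hmp : G.Adj m p) (hmq : G.Adj m q) :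
    Degenerate (identify G p q) (k - 1) := by
  have hk : 0 < k := pos_of_adj hreg hmp
  intro T hT
  by_contra! hdeg
  replace hdeg : ∀ z ∈ T, k ≤ (T ∩ (identify G p q).neighborSet z).ncard := fun z hz => by
    have := hdeg z hz
    lia
  have hqT : q ∉ T := fun hq => by
    have hle := hdeg q hq
    have hempty : T ∩ (identify G p q).neighborSet q = ∅ :=
      Set.eq_empty_of_forall_notMem fun t ht => (identify_adj_of_ne hpq.symm ht.2).1 rfl
    rw [hempty, Set.ncard_empty] at hle
    lia
  set T' := T \ {p}
  have himage {z : V} (hz : z ∈ T') := image_update_id_subset_and_injOn hz.2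
    ((hreg z).le.trans (hdeg z hz.1))
  have hT'ne : T'.Nonempty := by
    obtain ⟨z, hz⟩ := hT
    obtain ⟨t, ht, hzt⟩ := Set.nonempty_of_ncard_ne_zero (hk.trans_le (hdeg z hz)).ne'
    by_cases hzp : z = p
    · exact ⟨t, ht, fun htp => (identify G p q).ne_of_adj hzt (hzp.trans htp.symm)⟩
    · exact ⟨z, hz, hzp⟩
  have hm : m ∈ T' := by
    refine (h3.mem_union_pair (p := p) (q := q) hT'ne ?_ (fun a ha b hab => ?_) m).resolve_right
      (not_or_intro hmp.ne hmq.ne)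
    · rw [Set.disjoint_right]
      rintro _ (rfl | rfl) hb
      exacts [hb.2 rfl, hqT hb.1]
    · by_contra hb
      simp only [Set.mem_union, Set.mem_insert_iff, Set.mem_singleton_iff, not_or] at hb
      exact hb.1 ⟨(himage ha).1 ⟨b, hab, Function.update_of_ne hb.2.2 _ _⟩, hb.2.1⟩
  exact hpq ((himage hm).2 hmp hmq (by simp [hpq]))

theorem IsProperColoring.comp_of_identify (hd : IsProperColoring (identify G p q) k d)
    (hpq : ¬ G.Adj p q) : IsProperColoring G k (d ∘ Function.update id q p) := by
  refine fun a b hab => hd ⟨fun heq => hpq ?_, a, b, hab, rfl, rfl⟩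
  by_cases ha : a = q <;> by_cases hb : b = q <;>
    simp only [Function.update_apply, ha, hb, if_true, if_false, id] at heq
  · exact absurd (ha.trans hb.symm) hab.ne
  · exact heq ▸ ha ▸ hab.symm
  · exact heq ▸ hb ▸ hab
  · exact absurd heq hab.ne

theorem comp_update_id_eq_self (hcpq : c p = c q) : c ∘ Function.update id q p = c := by
  ext v
  rcases eq_or_ne v q with rfl | hv <;> simp_all

theorem IsProperColoring.to_identify (hc : IsProperColoring G k c) (hcpq : c p = c q) :
    IsProperColoring (identify G p q) k c := by
  rintro _ _ ⟨-, a, b, hab, rfl, rfl⟩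
  have hcomp (v : V) : c (Function.update id q p v) = c v :=
    congrFun (comp_update_id_eq_self hcpq) v
  rw [hcomp, hcomp]
  exact hc hab

theorem SwapEquiv.comp_of_identify (h : SwapEquiv (identify G p q) c d) (hpq : ¬ G.Adj p q) :
    SwapEquiv G (c ∘ Function.update id q p) (d ∘ Function.update id q p) :=
  Relation.ReflTransGen.lift (fun e => e ∘ Function.update id q p)
    (fun _ _ ⟨hc, hd, a, b, hab⟩ =>
      ⟨hc.comp_of_identify hpq, hd.comp_of_identify hpq, a, b, fun _ => hab _⟩) _ _ h

variable [Fintype V] (hreg : ∀ z, (G.neighborSet z).ncard = k)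
  (h3 : ThreeConnected G)

include hreg h3

theorem swapEquiv_of_apply_eq (hpq : p ≠ q) (hnadj : ¬ G.Adj p q) (hmp : G.Adj m p)
    (hmq : G.Adj m q) (hc : IsProperColoring G k c) (hd : IsProperColoring G k d)
    (hcpq : c p = c q) (hdpq : d p = d q) : SwapEquiv G c d := by
  have hequiv := swapEquiv_of_degenerate (degenerate_identify hreg h3 hpq hmp hmq)
    (Nat.sub_one_lt (pos_of_adj hreg hmp).ne') (hc.to_identify hcpq) (hd.to_identify hdpq)
  have hlift := hequiv.comp_of_identify hnadj
  rwa [comp_update_id_eq_self hcpq, comp_update_id_eq_self hdpq] at hlift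

theorem exists_isProperColoring_apply_eq (hpq : p ≠ q) (hnadj : ¬ G.Adj p q) (hmp : G.Adj m p)
    (hmq : G.Adj m q) : ∃ c, IsProperColoring G k c ∧ c p = c q := by
  obtain ⟨d, hd⟩ := exists_isProperColoring_of_degenerate
    (degenerate_identify hreg h3 hpq hmp hmq) (Nat.sub_one_lt (pos_of_adj hreg hmp).ne')
  exact ⟨_, hd.comp_of_identify hnadj, by simp [hpq]⟩

end Identify

section Conflict

variable {k : ℕ} {G : SimpleGraph V} {α γ c d : V → Fin k} {x y w₁ w₂ u v p q : V} {D D' : Set V}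

/-- Two inequivalent proper colourings, one of them alike on the pair `x`, `y` of neighbours of `u`
and the other alike on the disjoint pair `w₁`, `w₂` of neighbours of `v`. -/
structure Conflict (G : SimpleGraph V) (α γ : V → Fin k) (x y w₁ w₂ u v : V) : Prop where
  ne_left : x ≠ y
  ne_right : w₁ ≠ w₂
  adj_left : G.Adj u x ∧ G.Adj u y
  adj_right : G.Adj v w₁ ∧ G.Adj v w₂
  notMem_left : v ∉ ({x, y} : Set V)
  notMem_right : u ∉ ({w₁, w₂} : Set V)
  disjoint : Disjoint ({x, y} : Set V) {w₁, w₂}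
  proper_left : IsProperColoring G k α
  proper_right : IsProperColoring G k γ
  apply_left : α x = α y
  apply_right : γ w₁ = γ w₂
  not_swapEquiv : ¬ SwapEquiv G α γ

/-- A minimal set `D` that cannot be coloured once `x`, `y` have received one colour and `w₁`, `w₂`
another. -/
def IsPairObstruction (G : SimpleGraph V) (k : ℕ) (x y w₁ w₂ : V) (D : Set V) : Prop :=
  ∃ c₀ : V → Fin k, c₀ x = c₀ y ∧ c₀ w₁ = c₀ w₂ ∧ c₀ x ≠ c₀ w₁ ∧
    IsObstruction G c₀ {x, y, w₁, w₂} D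

namespace Conflict

theorem swap (h : Conflict G α γ x y w₁ w₂ u v) : Conflict G γ α w₁ w₂ x y v u where
  ne_left := h.ne_right
  ne_right := h.ne_left
  adj_left := h.adj_right
  adj_right := h.adj_left
  notMem_left := h.notMem_right
  notMem_right := h.notMem_left
  disjoint := h.disjoint.symm
  proper_left := h.proper_right
  proper_right := h.proper_left
  apply_left := h.apply_right
  apply_right := h.apply_left
  not_swapEquiv := fun hγα => h.not_swapEquiv hγα.symm

theorem flip_left (h : Conflict G α γ x y w₁ w₂ u v) : Conflict G α γ y x w₁ w₂ u v where
  __ := h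
  ne_left := h.ne_left.symm
  adj_left := h.adj_left.symm
  notMem_left := Set.pair_comm x y ▸ h.notMem_left
  disjoint := Set.pair_comm x y ▸ h.disjoint
  apply_left := h.apply_left.symm

theorem flip_right (h : Conflict G α γ x y w₁ w₂ u v) : Conflict G α γ x y w₂ w₁ u v :=
  h.swap.flip_left.swap

theorem of_swapEquiv (h : Conflict G α γ x y w₁ w₂ u v) (hc : SwapEquiv G α c)
    (hcxy : c x = c y) : Conflict G c γ x y w₁ w₂ u v where
  __ := h
  proper_left := hc.isProperColoring h.proper_left
  apply_left := hcxy
  not_swapEquiv := fun hcγ => h.not_swapEquiv (hc.trans hcγ)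

theorem not_adj_left (h : Conflict G α γ x y w₁ w₂ u v) : ¬ G.Adj x y :=
  fun hxy => h.proper_left hxy h.apply_left

variable [Fintype V] (hreg : ∀ z, (G.neighborSet z).ncard = k) (h3 : ThreeConnected G)

include hreg h3

theorem swapEquiv_left (h : Conflict G α γ x y w₁ w₂ u v)
    (hc : IsProperColoring G k c) (hcxy : c x = c y) : SwapEquiv G α c :=
  swapEquiv_of_apply_eq hreg h3 h.ne_left h.not_adj_left h.adj_left.1 h.adj_left.2
    h.proper_left hc h.apply_left hcxy

theorem false_of_apply_eq (h : Conflict G α γ x y w₁ w₂ u v) {s t m : V}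
    (hαc : SwapEquiv G α c) (hγd : SwapEquiv G γ d) (hst : s ≠ t) (hms : G.Adj m s)
    (hmt : G.Adj m t) (hc : c s = c t) (hd : d s = d t) : False := by
  have hcp := hαc.isProperColoring h.proper_left
  have hcd := swapEquiv_of_apply_eq hreg h3 hst (fun hadj => hcp hadj hc) hms hmt hcp
    (hγd.isProperColoring h.proper_right) hc hd
  exact h.not_swapEquiv ((hαc.trans hcd).trans hγd.symm)

theorem apply_ne (h : Conflict G α γ x y w₁ w₂ u v) : α w₁ ≠ α w₂ :=
  fun hw => h.false_of_apply_eq hreg h3 .refl .refl h.ne_right h.adj_right.1 h.adj_right.2 hw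
    h.apply_right

theorem exists_isPairObstruction (h : Conflict G α γ x y w₁ w₂ u v) :
    ∃ D, IsPairObstruction G k x y w₁ w₂ D := by
  set c₀ : V → Fin k := ({x, y} : Set V).piecewise (fun _ => α w₁) fun _ => α w₂
  have hpair {z : V} (hz : z ∈ ({x, y} : Set V)) : c₀ z = α w₁ :=
    Set.piecewise_eq_of_mem _ _ _ hz
  have hpair' {z : V} (hz : z ∈ ({w₁, w₂} : Set V)) : c₀ z = α w₂ :=
    Set.piecewise_eq_of_notMem _ _ _ (h.disjoint.notMem_of_mem_right hz)
  have hc₀ : ∀ z ∈ ({x, y, w₁, w₂} : Set V), ∀ t ∈ ({x, y, w₁, w₂} : Set V),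
      G.Adj z t → c₀ z ≠ c₀ t := by
    have hleft := h.not_adj_left
    have hright := h.swap.not_adj_left
    have hne := h.apply_ne hreg h3
    rintro z (hz | hz | hz | hz) t (ht | ht | ht | ht) hzt <;> cases hz <;> cases ht <;>
      simp_all [G.adj_comm, hne.symm]
  have hext : ¬ ExtendsTo G c₀ {x, y, w₁, w₂} {x, y, w₁, w₂}ᶜ := by
    rintro ⟨c, hcS, hc⟩
    have hproper : IsProperColoring G k c := by
      intro z t hzt
      by_cases hz : z ∈ ({x, y, w₁, w₂} : Set V)
      · by_cases ht : t ∈ ({x, y, w₁, w₂} : Set V)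
        · rw [hcS hz, hcS ht]
          exact hc₀ z hz t ht hzt
        · exact (hc t ht z (.inl hz) hzt.symm).symm
      · exact hc z hz t (em _) hzt
    refine h.not_swapEquiv ((h.swapEquiv_left hreg h3 hproper ?_).trans
      (h.swap.swapEquiv_left hreg h3 hproper ?_).symm)
    · rw [hcS (by simp), hcS (by simp), hpair (by simp), hpair (by simp)]
    · rw [hcS (by simp), hcS (by simp), hpair' (by simp), hpair' (by simp)]
  obtain ⟨D, hD⟩ := exists_isObstruction disjoint_compl_right hext
  refine ⟨D, c₀, ?_, ?_, ?_, hD⟩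
  · rw [hpair (by simp), hpair (by simp)]
  · rw [hpair' (by simp), hpair' (by simp)]
  · rw [hpair (by simp), hpair' (by simp)]
    exact h.apply_ne hreg h3

end Conflict

namespace IsPairObstruction

theorem swap (hD : IsPairObstruction G k x y w₁ w₂ D) : IsPairObstruction G k w₁ w₂ x y D := by
  obtain ⟨c₀, hxy, hw, hne, hD⟩ := hD
  refine ⟨c₀, hw, hxy, hne.symm, ?_⟩
  convert hD using 1
  ext z
  simp only [Set.mem_insert_iff, Set.mem_singleton_iff]
  tauto

theorem flip_left (hD : IsPairObstruction G k x y w₁ w₂ D) :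
    IsPairObstruction G k y x w₁ w₂ D := by
  obtain ⟨c₀, hxy, hw, hne, hD⟩ := hD
  exact ⟨c₀, hxy.symm, hw, hxy ▸ hne, Set.insert_comm x y _ ▸ hD⟩

theorem notMem_of_mem_left (hD : IsPairObstruction G k x y w₁ w₂ D) {s : V}
    (hs : s ∈ ({x, y} : Set V)) : s ∉ D := by
  obtain ⟨c₀, -, -, -, hD⟩ := hD
  exact hD.disjoint.notMem_of_mem_left (by rcases hs with rfl | rfl <;> simp)

theorem notMem_left (hD : IsPairObstruction G k x y w₁ w₂ D) : x ∉ D :=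
  hD.notMem_of_mem_left (.inl rfl)

theorem exists_adj_diff (hD : IsPairObstruction G k x y w₁ w₂ D) {T : Set V} (hT : T.Nonempty)
    (hTD : T ⊂ D) : ∃ z ∈ T, ∃ t ∈ D \ T, G.Adj z t := by
  obtain ⟨c₀, -, -, -, hD⟩ := hD
  exact hD.exists_adj_diff hT hTD

variable [Finite V] (hreg : ∀ z, (G.neighborSet z).ncard = k)

include hreg

theorem mem_of_adj (hD : IsPairObstruction G k x y w₁ w₂ D) {z t : V} (hz : z ∈ D)
    (hzt : G.Adj z t) : t ∈ D ∨ t = x ∨ t = y ∨ t = w₁ ∨ t = w₂ := by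
  obtain ⟨c₀, -, -, -, hD⟩ := hD
  simpa [or_comm] using hD.neighborSet_subset hreg hz hzt

theorem mem_pair_of_adj (hD : IsPairObstruction G k x y w₁ w₂ D) {z t : V} (hz : z ∈ D)
    (hzt : G.Adj z t) (ht : t ∉ D) (htw : t ∉ ({w₁, w₂} : Set V)) : t ∈ ({x, y} : Set V) := by
  rcases hD.mem_of_adj hreg hz hzt with h | h | h | h | h
  exacts [absurd h ht, .inl h, .inr h, absurd (.inl h) htw, absurd (.inr h) htw]

theorem notMem_of_adj (hD : IsPairObstruction G k x y w₁ w₂ D) (hxy : x ≠ y) {z : V}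
    (hzx : G.Adj z x) (hzy : G.Adj z y) : z ∉ D := by
  obtain ⟨c₀, hc₀, -, -, hD⟩ := hD
  exact fun hz => hxy (hD.injOn hreg hz ⟨hzx, by simp⟩ ⟨hzy, by simp⟩ hc₀)

end IsPairObstruction

namespace Conflict

theorem pair_subset_of_mem [Finite V] (hreg : ∀ z, (G.neighborSet z).ncard = k)
    (h : Conflict G α γ x y w₁ w₂ u v) (hD : IsPairObstruction G k x y w₁ w₂ D)
    (hcl : ∀ a ∈ D', ∀ b ∉ D, G.Adj a b → b ∉ ({w₁, w₂} : Set V) → b ∈ D') {s : V}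
    (hs : s ∈ ({x, y} : Set V)) (hsD' : s ∈ D') : {x, y} ⊆ D' := by
  have huD : u ∉ D := hD.notMem_of_adj hreg h.ne_left h.adj_left.1 h.adj_left.2
  have hut : ∀ t ∈ ({x, y} : Set V), G.Adj u t := by
    rintro t (rfl | rfl)
    exacts [h.adj_left.1, h.adj_left.2]
  have hu : u ∈ D' := hcl s hsD' u huD (hut s hs).symm h.notMem_right
  exact fun t ht => hcl u hu t (hD.notMem_of_mem_left ht) (hut t ht)
    (h.disjoint.notMem_of_mem_left ht)

variable [Fintype V] (hreg : ∀ z, (G.neighborSet z).ncard = k) (h3 : ThreeConnected G)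

include hreg h3

/-- The vertices outside `D`, `D'` and `{w₁, w₂}` have no neighbour in `D ∪ D'`, so otherwise `w₁`
and `w₂` would separate `x` from `v`. -/
theorem not_pair_subset (h : Conflict G α γ x y w₁ w₂ u v)
    (hD : IsPairObstruction G k x y w₁ w₂ D) (hD' : IsPairObstruction G k p q w₁ w₂ D')
    (hcl : ∀ a ∈ D', ∀ b ∉ D, G.Adj a b → b ∉ ({w₁, w₂} : Set V) → b ∈ D') :
    ¬ {x, y} ⊆ D' := by
  intro hxy
  have hx : x ∈ (D ∪ D' ∪ {w₁, w₂})ᶜ ∪ {w₁, w₂} := by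
    refine h3.mem_union_pair ⟨v, ?_⟩ (disjoint_compl_left.mono_right Set.subset_union_right)
      (fun b hb s hbs => by_contra fun hs => ?_) x
    · rintro ((hv | hv) | rfl | rfl)
      exacts [hD.swap.notMem_of_adj hreg h.ne_right h.adj_right.1 h.adj_right.2 hv,
        hD'.swap.notMem_of_adj hreg h.ne_right h.adj_right.1 h.adj_right.2 hv,
        h.adj_right.1.ne rfl, h.adj_right.2.ne rfl]
    · have hbw : b ∉ ({w₁, w₂} : Set V) := fun h => hb (.inr h)
      have hbD : b ∉ D := fun h => hb (.inl (.inl h))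
      have hbD' : b ∉ D' := fun h => hb (.inl (.inr h))
      rcases (not_not.1 fun h => hs (.inl h)).resolve_right fun h => hs (.inr h) with hsD | hsD'
      · exact hbD' (hxy (hD.mem_pair_of_adj hreg hsD hbs.symm hbD hbw))
      · exact hbD' (hcl s hsD' b hbD hbs.symm hbw)
  exact hx.elim (fun hF => hF (.inl (.inr (hxy (.inl rfl)))))
    (h.disjoint.notMem_of_mem_left (.inl rfl))

/-- Otherwise `w₁` and `w₂` would separate `D' \ D` from `p`. -/
theorem ssubset (h : Conflict G α γ x y w₁ w₂ u v) (hD : IsPairObstruction G k x y w₁ w₂ D)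
    (hD' : IsPairObstruction G k p q w₁ w₂ D') (hpq : {p, q} ⊆ D) : D' ⊂ D := by
  have hp : p ∈ D := hpq (.inl rfl)
  have hcl : ∀ a ∈ D', ∀ b ∉ D, G.Adj a b → b ∉ ({w₁, w₂} : Set V) → b ∈ D' :=
    fun a ha b hb hab hbw => by_contra fun hbD' =>
      hb (hpq (hD'.mem_pair_of_adj hreg ha hab hbD' hbw))
  refine ⟨fun a ha => by_contra fun haD => ?_, fun hDD' => hD'.notMem_left (hDD' hp)⟩
  have hpF : p ∈ D' \ D ∪ {w₁, w₂} := by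
    refine h3.mem_union_pair (F := D' \ D) ⟨a, ha, haD⟩
      (Set.disjoint_right.2 fun b hb hb' => hD'.swap.notMem_of_mem_left hb hb'.1)
      (fun b hb s hbs => ?_) p
    have hbw : b ∉ ({w₁, w₂} : Set V) := fun hbw => hD'.swap.notMem_of_mem_left hbw hb.1
    by_cases hsD : s ∈ D
    · exact absurd (h.pair_subset_of_mem hreg hD hcl
        (hD.mem_pair_of_adj hreg hsD hbs.symm hb.2 hbw) hb.1) (h.not_pair_subset hreg h3 hD hD' hcl)
    · by_cases hsw : s ∈ ({w₁, w₂} : Set V)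
      exacts [.inr hsw, .inl ⟨hcl b hb.1 s hsD hbs hsw, hsD⟩]
  exact hpF.elim (fun hF => hF.2 hp) fun hpw => hD.swap.notMem_of_mem_left hpw hp

/-- Otherwise a colouring alike on `p` and `q` would be equivalent both to `α` and to `γ`. -/
theorem adj_of_adj (h : Conflict G α γ x y w₁ w₂ u v)
    (hD : IsPairObstruction G k x y w₁ w₂ D)
    (hmin : ∀ {α' γ' : V → Fin k} {x' y' w₁' w₂' u' v' D'}, Conflict G α' γ' x' y' w₁' w₂' u' v' →
      IsPairObstruction G k x' y' w₁' w₂' D' → D.ncard ≤ D'.ncard)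
    {t : V} (ht : t ∈ D) (hp : p ∈ D) (hq : q ∈ D) (hpq : p ≠ q) (htp : G.Adj t p)
    (htq : G.Adj t q) : G.Adj p q := by
  have aux {α γ : V → Fin k} {x y w₁ w₂ u v : V} (h : Conflict G α γ x y w₁ w₂ u v)
      (hD : IsPairObstruction G k x y w₁ w₂ D) {c : V → Fin k} (hc : IsProperColoring G k c)
      (hcpq : c p = c q) : SwapEquiv G c γ := by
    by_contra hcγ
    have hw {z : V} (hz : z ∈ D) : z ∉ ({w₁, w₂} : Set V) :=
      fun hzw => hD.swap.notMem_of_mem_left hzw hz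
    have hvD : v ∉ D := hD.swap.notMem_of_adj hreg h.ne_right h.adj_right.1 h.adj_right.2
    have hpqD : ({p, q} : Set V) ⊆ D := Set.pair_subset hp hq
    have h' : Conflict G c γ p q w₁ w₂ t v :=
      { h with
        ne_left := hpq
        adj_left := ⟨htp, htq⟩
        notMem_left := fun hv => hvD (hpqD hv)
        notMem_right := hw ht
        disjoint := Set.disjoint_left.2 fun z hz => hw (hpqD hz)
        proper_left := hc
        apply_left := hcpq
        not_swapEquiv := hcγ }
    obtain ⟨D', hD'⟩ := h'.exists_isPairObstruction hreg h3
    exact (Set.ncard_lt_ncard (h.ssubset hreg h3 hD hD' hpqD)).not_ge (hmin h' hD')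
  by_contra hnadj
  obtain ⟨c, hc, hcpq⟩ :=
    exists_isProperColoring_apply_eq hreg h3 hpq hnadj htp htq
  exact h.not_swapEquiv ((aux h.swap hD.swap hc hcpq).symm.trans (aux h hD hc hcpq))

end Conflict

end Conflict

section CliqueCut

variable {k : ℕ} {G : SimpleGraph V} {α : V → Fin k} {x y w₁ w₂ : V} {D : Set V}

/-- A clique `D` with `k - 1` vertices, each of which is joined to the outside by exactly two edges:
one to the pair `x`, `y` and one to the pair `w₁`, `w₂`. -/
structure CliqueCut (G : SimpleGraph V) (k : ℕ) (D : Set V) (x y w₁ w₂ : V) : Prop where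
  isClique : G.IsClique D
  ncard_add_one : D.ncard + 1 = k
  mem_of_adj : ∀ ⦃z⦄, z ∈ D → ∀ ⦃t⦄, G.Adj z t → t ∈ D ∨ t = x ∨ t = y ∨ t = w₁ ∨ t = w₂
  adj_left : ∀ ⦃z⦄, z ∈ D → (G.Adj z x ↔ ¬ G.Adj z y)
  adj_right : ∀ ⦃z⦄, z ∈ D → (G.Adj z w₁ ↔ ¬ G.Adj z w₂)
  notMem_left : x ∉ D ∧ y ∉ D
  notMem_right : w₁ ∉ D ∧ w₂ ∉ D

theorem IsProperColoring.injOn (hα : IsProperColoring G k α) (hD : G.IsClique D) :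
    Set.InjOn α D :=
  fun _ hz _ ht h => by_contra fun hne => hα (hD hz ht hne) h

namespace IsPairObstruction

theorem isClique (hD : IsPairObstruction G k x y w₁ w₂ D)
    (hadj : ∀ t ∈ D, ∀ p ∈ D, ∀ q ∈ D, p ≠ q → G.Adj t p → G.Adj t q → G.Adj p q) :
    G.IsClique D := by
  intro p hp q hq hpq
  by_contra hnadj
  have hsub : insert p (G.neighborSet p ∩ D) ⊂ D := by
    refine ⟨Set.insert_subset hp Set.inter_subset_right, fun h => ?_⟩
    exact (h hq).elim hpq.symm fun h => hnadj h.1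
  obtain ⟨z, hz, t, ⟨htD, ht⟩, hzt⟩ := hD.exists_adj_diff ⟨p, .inl rfl⟩ hsub
  have hpt : p ≠ t := fun hpt => ht (.inl hpt.symm)
  refine ht (.inr ⟨?_, htD⟩)
  rcases hz with rfl | ⟨hpz, hzD⟩
  · exact hzt
  · exact hadj z hzD p hp t htD hpt hpz.symm hzt

variable (hreg : ∀ z, (G.neighborSet z).ncard = k)

include hreg

theorem ncard_inter_le_one [Finite V] (hD : IsPairObstruction G k x y w₁ w₂ D) (hxy : x ≠ y)
    {z : V} (hz : z ∈ D) : (G.neighborSet z ∩ {x, y}).ncard ≤ 1 := by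
  have hnot : ¬ (G.Adj z x ∧ G.Adj z y) := fun h => hD.notMem_of_adj hreg hxy h.1 h.2 hz
  rw [Set.ncard_le_one]
  rintro s ⟨hs, rfl | rfl⟩ t ⟨ht, rfl | rfl⟩
  exacts [rfl, absurd ⟨hs, ht⟩ hnot, absurd ⟨ht, hs⟩ hnot, rfl]

theorem ncard_inter_add_ncard_inter [Finite V] (hD : IsPairObstruction G k x y w₁ w₂ D)
    (hdisj : Disjoint ({x, y} : Set V) {w₁, w₂}) (hclique : G.IsClique D) {z : V} (hz : z ∈ D) :
    (G.neighborSet z ∩ {x, y}).ncard + (G.neighborSet z ∩ {w₁, w₂}).ncard + D.ncard = k + 1 := by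
  have hunion : G.neighborSet z =
      (G.neighborSet z ∩ {x, y}) ∪ (G.neighborSet z ∩ {w₁, w₂}) ∪ D \ {z} := by
    ext t
    simp only [Set.mem_union, Set.mem_inter_iff, Set.mem_sdiff, Set.mem_singleton_iff,
      Set.mem_insert_iff, mem_neighborSet]
    constructor
    · intro hzt
      have := hzt.ne'
      have := hD.mem_of_adj hreg hz hzt
      tauto
    · rintro ((h | h) | h)
      exacts [h.1, h.1, hclique hz h.1 (Ne.symm h.2)]
  have hdisj' : Disjoint (G.neighborSet z ∩ {x, y} ∪ G.neighborSet z ∩ {w₁, w₂}) (D \ {z}) := by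
    refine Set.disjoint_left.2 ?_
    rintro t (ht | ht) htD
    exacts [hD.notMem_of_mem_left ht.2 htD.1, hD.swap.notMem_of_mem_left ht.2 htD.1]
  have hcard := hreg z
  rw [hunion, Set.ncard_union_eq hdisj',
    Set.ncard_union_eq (hdisj.mono Set.inter_subset_right Set.inter_subset_right)] at hcard
  have := Set.ncard_sdiff_singleton_add_one hz
  lia

variable [Fintype V] (h3 : ThreeConnected G)

include h3

/-- Otherwise `x` and `y` would separate `D` from `w₁`. -/
theorem exists_inter_nonempty (hD : IsPairObstruction G k x y w₁ w₂ D)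
    (hdisj : Disjoint ({x, y} : Set V) {w₁, w₂}) :
    ∃ z ∈ D, (G.neighborSet z ∩ {w₁, w₂}).Nonempty := by
  by_contra! hempty
  have hnonempty : D.Nonempty := by
    obtain ⟨c₀, -, -, -, hD⟩ := hD
    exact hD.nonempty
  have hw₁ : w₁ ∈ D ∪ {x, y} := by
    refine h3.mem_union_pair hnonempty (Set.disjoint_right.2 fun z hz => hD.notMem_of_mem_left hz)
      (fun z hz t hzt => ?_) w₁
    by_cases ht : t ∈ D
    · exact .inl ht
    · exact .inr (hD.mem_pair_of_adj hreg hz hzt ht fun htw => (hempty z hz).le ⟨hzt, htw⟩)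
  exact hw₁.elim hD.swap.notMem_left (hdisj.notMem_of_mem_right (.inl rfl))

theorem exists_inter_eq_empty (hD : IsPairObstruction G k x y w₁ w₂ D)
    (hdisj : Disjoint ({x, y} : Set V) {w₁, w₂}) (hclique : G.IsClique D) (hcard : D.ncard = k) :
    ∃ z ∈ D, G.neighborSet z ∩ {x, y} = ∅ := by
  obtain ⟨z, hz, hzw⟩ := hD.exists_inter_nonempty hreg h3 hdisj
  refine ⟨z, hz, (Set.ncard_eq_zero (Set.toFinite _)).1 ?_⟩
  have hsum := hD.ncard_inter_add_ncard_inter hreg hdisj hclique hz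
  have hpos := (Set.ncard_pos (Set.toFinite _)).2 hzw
  lia

/-- If `D` had `k` vertices, one could permute the colours of `α` so that a vertex of `D` not
adjacent to `x`, `y` gets the colour of `x`, `y` and a vertex of `D` not adjacent to `w₁`, `w₂` gets
the colour of `w₁`, `w₂`. -/
theorem ncard_ne (hD : IsPairObstruction G k x y w₁ w₂ D)
    (hdisj : Disjoint ({x, y} : Set V) {w₁, w₂}) (hclique : G.IsClique D)
    (hα : IsProperColoring G k α) : D.ncard ≠ k := by
  intro hcard
  obtain ⟨p, hpD, hp⟩ := hD.exists_inter_eq_empty hreg h3 hdisj hclique hcard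
  obtain ⟨q, hqD, hq⟩ := hD.swap.exists_inter_eq_empty hreg h3 hdisj.symm hclique hcard
  have hpq : p ≠ q := by
    rintro rfl
    have hsum := hD.ncard_inter_add_ncard_inter hreg hdisj hclique hpD
    rw [hp, hq, Set.ncard_empty] at hsum
    lia
  obtain ⟨c₀, hxy, hw, hne, hobs⟩ := hD
  have hinj : Set.InjOn α D := hα.injOn hclique
  obtain ⟨σ, hσp, hσq⟩ := MulAction.is_two_pretransitive_iff.1
    (Equiv.Perm.isMultiplyPretransitive (Fin k) 2) (hinj.ne hpD hqD hpq) hne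
  refine hobs.not_extendsTo ⟨D.piecewise (σ ∘ α) c₀, fun t ht => ?_, fun z hz t ht hzt => ?_⟩
  · exact Set.piecewise_eq_of_notMem _ _ _ (hobs.disjoint.notMem_of_mem_left ht)
  rw [Set.piecewise_eq_of_mem _ _ _ hz]
  rcases ht with ht | ht
  · rw [Set.piecewise_eq_of_notMem _ _ _ (hobs.disjoint.notMem_of_mem_left ht)]
    intro hct
    have heq {s : V} (hs : s ∈ D) (hσs : σ (α s) = c₀ t) : z = s :=
      hinj hz hs (σ.injective (hct.trans hσs.symm))
    rcases ht with rfl | rfl | rfl | rfl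
    · exact hp.le ⟨heq hpD hσp ▸ hzt, .inl rfl⟩
    · exact hp.le ⟨heq hpD (hσp.trans hxy) ▸ hzt, .inr rfl⟩
    · exact hq.le ⟨heq hqD hσq ▸ hzt, .inl rfl⟩
    · exact hq.le ⟨heq hqD (hσq.trans hw) ▸ hzt, .inr rfl⟩
  · rw [Set.piecewise_eq_of_mem _ _ _ ht]
    exact σ.injective.ne (hα hzt)

/-- `D` has fewer than `k` vertices, since `α` is injective on it, so each of them has two
neighbours outside `D`. -/
theorem cliqueCut (hD : IsPairObstruction G k x y w₁ w₂ D)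
    (hdisj : Disjoint ({x, y} : Set V) {w₁, w₂}) (hclique : G.IsClique D) (hxy : x ≠ y)
    (hw : w₁ ≠ w₂) (hα : IsProperColoring G k α) : CliqueCut G k D x y w₁ w₂ := by
  have hlt : D.ncard < k := by
    refine lt_of_le_of_ne ?_ (hD.ncard_ne hreg h3 hdisj hclique hα)
    rw [← (hα.injOn hclique).ncard_image]
    exact (Set.ncard_le_card _).trans_eq (Nat.card_fin k)
  have hone {z : V} (hz : z ∈ D) : (G.neighborSet z ∩ {x, y}).ncard = 1 ∧
      (G.neighborSet z ∩ {w₁, w₂}).ncard = 1 ∧ D.ncard + 1 = k := by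
    have h1 := hD.ncard_inter_le_one hreg hxy hz
    have h2 := hD.swap.ncard_inter_le_one hreg hw hz
    have hsum := hD.ncard_inter_add_ncard_inter hreg hdisj hclique hz
    lia
  have iff_not {z s t : V} (hz : (G.neighborSet z ∩ {s, t}).ncard = 1) (hst : s ≠ t) :
      G.Adj z s ↔ ¬ G.Adj z t := by
    refine ⟨fun hs ht => hst ?_, fun ht => ?_⟩
    · exact (Set.ncard_le_one (Set.toFinite _)).1 hz.le s ⟨hs, .inl rfl⟩ t ⟨ht, .inr rfl⟩
    · obtain ⟨r, hr, rfl | rfl⟩ := Set.nonempty_of_ncard_ne_zero (hz.trans_ne one_ne_zero)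
      exacts [hr, absurd hr ht]
  obtain ⟨z, hz, -⟩ := hD.exists_inter_nonempty hreg h3 hdisj
  exact
    { isClique := hclique
      ncard_add_one := (hone hz).2.2
      mem_of_adj := fun z hz t hzt => hD.mem_of_adj hreg hz hzt
      adj_left := fun z hz => iff_not (hone hz).1 hxy
      adj_right := fun z hz => iff_not (hone hz).2.1 hw
      notMem_left := ⟨hD.notMem_left, hD.flip_left.notMem_left⟩
      notMem_right := ⟨hD.swap.notMem_left, hD.swap.flip_left.notMem_left⟩ }

end IsPairObstruction

theorem Conflict.exists_cliqueCut [Fintype V] (hreg : ∀ z, (G.neighborSet z).ncard = k)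
    (h3 : ThreeConnected G) {γ : V → Fin k} {u v : V}
    (h : Conflict G α γ x y w₁ w₂ u v) :
    ∃ (α' γ' : V → Fin k) (x' y' w₁' w₂' u' v' : V) (D' : Set V),
      Conflict G α' γ' x' y' w₁' w₂' u' v' ∧ CliqueCut G k D' x' y' w₁' w₂' := by
  obtain ⟨D, hD⟩ := h.exists_isPairObstruction hreg h3
  induction hn : D.ncard using Nat.strong_induction_on generalizing α γ x y w₁ w₂ u v D with
  | _ n ih =>
  by_contra hnot
  have hmin {α' γ' : V → Fin k} {x' y' w₁' w₂' u' v' : V} {D' : Set V}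
      (h' : Conflict G α' γ' x' y' w₁' w₂' u' v') (hD' : IsPairObstruction G k x' y' w₁' w₂' D') :
      D.ncard ≤ D'.ncard := by
    by_contra! hlt
    exact hnot (ih _ (hn ▸ hlt) h' D' hD' rfl)
  have hclique := hD.isClique fun t ht p hp q hq => h.adj_of_adj hreg h3 hD hmin ht hp hq
  exact hnot ⟨α, γ, x, y, w₁, w₂, u, v, D, h,
    hD.cliqueCut hreg h3 h.disjoint hclique h.ne_left h.ne_right h.proper_left⟩

end CliqueCut

section Recolour

variable {k : ℕ} {G : SimpleGraph V} {c : V → Fin k} {a b e g : Fin k} {x y w₁ w₂ d s : V}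
  {D T : Set V}

theorem isSwap_swapOn_union (hc : IsProperColoring G k c) (hTa : ∀ s ∈ T, c s = a)
    (hTb : ∀ s ∈ T, ∀ t ∉ D, G.Adj s t → c t ≠ b)
    (hDa : ∀ d ∈ D, c d = a → ∀ t ∉ D, t ∉ T → G.Adj d t → c t ≠ b)
    (hDb : ∀ d ∈ D, c d = b → ∀ t ∉ D, t ∉ T → G.Adj d t → c t ≠ a) :
    IsSwap G c (swapOn c a b (T ∪ {d ∈ D | c d = a ∨ c d = b})) := by
  refine isSwap_swapOn hc fun v hv t ht hvt => ?_
  have htT : t ∉ T := fun h => ht (.inl h)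
  have htD : t ∈ D → c t ≠ a ∧ c t ≠ b := fun h => not_or.1 fun h' => ht (.inr ⟨h, h'⟩)
  rcases hv with hv | ⟨hv, hva | hvb⟩
  · rw [hTa v hv, Equiv.swap_apply_left]
    exact if h : t ∈ D then (htD h).2 else hTb v hv t h hvt
  · rw [hva, Equiv.swap_apply_left]
    exact if h : t ∈ D then (htD h).2 else hDa v hv hva t h htT hvt
  · rw [hvb, Equiv.swap_apply_right]
    exact if h : t ∈ D then (htD h).1 else hDb v hv hvb t h htT hvt

theorem isSwap_update_of_isClique (hc : IsProperColoring G k c) (hD : G.IsClique D) (hd : d ∈ D)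
    (hds : ¬ G.Adj d s) (hs : ∀ t ∉ D, G.Adj s t → c t ≠ c d) :
    IsSwap G c (Function.update c s (c d)) := by
  refine isSwap_update hc fun t hst htd => ?_
  by_cases ht : t ∈ D
  · exact hds ((hc.injOn hD ht hd htd) ▸ hst.symm)
  · exact hs t ht hst htd

theorem exists_color_forall_notMem [Finite V] (hreg : ∀ z, (G.neighborSet z).ncard = k)
    (hs : 2 ≤ (G.neighborSet s ∩ D).ncard) (c : V → Fin k) (e : Fin k) :
    ∃ g ≠ e, ∀ t ∉ D, G.Adj s t → c t ≠ g := by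
  obtain ⟨g, hg⟩ : ∃ g, g ∉ insert e (c '' (G.neighborSet s \ D)) := by
    refine exists_color_notMem ((Set.ncard_insert_le _ _).trans_lt ?_)
    have himage := Set.ncard_image_le (f := c) (Set.toFinite (G.neighborSet s \ D))
    have hsum := Set.ncard_inter_add_ncard_sdiff_eq_ncard (G.neighborSet s) D (Set.toFinite _)
    rw [hreg] at hsum
    lia
  exact ⟨g, fun h => hg (.inl h), fun t ht hst h => hg (.inr ⟨t, ⟨hst, ht⟩, h⟩)⟩

namespace CliqueCut

theorem flip_left (hD : CliqueCut G k D x y w₁ w₂) : CliqueCut G k D y x w₁ w₂ where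
  __ := hD
  mem_of_adj := fun z hz t hzt => by
    have := hD.mem_of_adj hz hzt
    tauto
  adj_left := fun z hz => by simp [hD.adj_left hz]
  notMem_left := hD.notMem_left.symm

theorem swap (hD : CliqueCut G k D x y w₁ w₂) : CliqueCut G k D w₁ w₂ x y where
  __ := hD
  mem_of_adj := fun z hz t hzt => by
    have := hD.mem_of_adj hz hzt
    tauto
  adj_left := hD.adj_right
  adj_right := hD.adj_left
  notMem_left := hD.notMem_right
  notMem_right := hD.notMem_left

theorem flip_right (hD : CliqueCut G k D x y w₁ w₂) : CliqueCut G k D x y w₂ w₁ :=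
  hD.swap.flip_left.swap

theorem two_le_ncard_or_two_le_ncard [Finite V] (hk : 4 ≤ k) (hD : CliqueCut G k D x y w₁ w₂) :
    2 ≤ (G.neighborSet x ∩ D).ncard ∨ 2 ≤ (G.neighborSet y ∩ D).ncard := by
  have hx : G.neighborSet x ∩ D = D ∩ {z | G.Adj z x} := by
    ext z
    simp [G.adj_comm, and_comm]
  have hy : G.neighborSet y ∩ D = D \ {z | G.Adj z x} := by
    ext z
    simp +contextual [G.adj_comm y, and_comm, hD.adj_left]
  have hsum := Set.ncard_inter_add_ncard_sdiff_eq_ncard D {z | G.Adj z x} (Set.toFinite _)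
  have hcard := hD.ncard_add_one
  rw [hx, hy]
  lia

theorem apply_ne_of_mem (hD : CliqueCut G k D x y w₁ w₂) (hc : IsProperColoring G k c)
    (hcxy : c x = c y) (hd : d ∈ D) : c d ≠ c x := by
  by_cases hdx : G.Adj d x
  · exact hc hdx
  · exact hcxy ▸ hc (hD.flip_left.adj_left hd |>.2 hdx)

theorem mem_pair_or_apply_eq (hD : CliqueCut G k D x y w₁ w₂) (hcxy : c x = c y) (hd : d ∈ D)
    {t : V} (hdt : G.Adj d t) (ht : t ∉ D) : t ∈ ({w₁, w₂} : Set V) ∨ c t = c x := by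
  rcases hD.mem_of_adj hd hdt with h | rfl | rfl | h | h
  exacts [absurd h ht, .inr rfl, .inr hcxy.symm, .inl (.inl h), .inl (.inr h)]

theorem exists_apply_eq [Finite V] (hD : CliqueCut G k D x y w₁ w₂) (hc : IsProperColoring G k c)
    (hcxy : c x = c y) (hg : g ≠ c x) : ∃ d ∈ D, c d = g := by
  have hsub : c '' D ⊆ {c x}ᶜ := by
    rintro _ ⟨d, hd, rfl⟩
    exact hD.apply_ne_of_mem hc hcxy hd
  refine (Set.eq_of_subset_of_ncard_le hsub ?_).ge hg
  have hcompl := Set.ncard_add_ncard_compl {c x}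
  rw [Set.ncard_singleton, Nat.card_fin] at hcompl
  rw [(hc.injOn hD.isClique).ncard_image]
  have hcard := hD.ncard_add_one
  lia

theorem exists_not_adj_left [Finite V] (hD : CliqueCut G k D x y w₁ w₂)
    (hc : IsProperColoring G k c) (hcw : c w₁ = c w₂) (hx : c x ≠ c w₁) :
    ∃ d ∈ D, ¬ G.Adj d x := by
  obtain ⟨d, hd, hdx⟩ := hD.swap.exists_apply_eq hc hcw hx
  exact ⟨d, hd, fun hadj => hc hadj hdx⟩

theorem exists_isSwap_apply_eq [Finite V] (hD : CliqueCut G k D x y w₁ w₂)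
    (hc : IsProperColoring G k c) (hcxy : c x = c y) (hd : d ∈ D) (hg : g ≠ c x)
    (hdg : ∀ w ∈ ({w₁, w₂} : Set V), G.Adj d w → c w ≠ g)
    (hgd : ∀ z ∈ D, c z = g → ∀ w ∈ ({w₁, w₂} : Set V), G.Adj z w → c w ≠ c d) :
    ∃ c', IsSwap G c c' ∧ c' d = g ∧ Set.EqOn c' c Dᶜ := by
  obtain ⟨z, hz, rfl⟩ := hD.exists_apply_eq hc hcxy hg
  have hD_ne : ∀ s ∈ D, c s ≠ c x := fun s => hD.apply_ne_of_mem hc hcxy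
  refine ⟨_, isSwap_swapOn_union (T := ∅) (D := D) (a := c d) (b := c z) hc (by simp) (by simp)
    (fun s hs hsd t ht _ hst => ?_) (fun s hs hsz t ht _ hst => ?_), ?_,
    fun t ht => swapOn_of_notMem ?_⟩
  · rcases hD.mem_pair_or_apply_eq hcxy hs hst ht with hw | htx
    exacts [hdg t hw (hc.injOn hD.isClique hs hd hsd ▸ hst), htx.trans_ne (hD_ne z hz).symm]
  · rcases hD.mem_pair_or_apply_eq hcxy hs hst ht with hw | htx
    exacts [hgd s hs hsz t hw hst, htx.trans_ne (hD_ne d hd).symm]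
  · rw [swapOn_of_mem (.inr ⟨hd, .inl rfl⟩), Equiv.swap_apply_left]
  · rintro (h | h)
    exacts [h, ht h.1]

theorem exists_swapEquiv_apply_eq [Finite V] (hD : CliqueCut G k D x y w₁ w₂)
    (hc : IsProperColoring G k c) (hcw : c w₁ = c w₂) (hx : c x ≠ c w₁) (hd : d ∈ D)
    (hdx : ¬ G.Adj d x) : ∃ c', SwapEquiv G c c' ∧ c' x = c' d := by
  have hadj {z : V} (hz : z ∈ D) (hzx : ¬ G.Adj z x) : G.Adj z y :=
    (hD.flip_left.adj_left hz).2 hzx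
  obtain ⟨z, hz, hzx⟩ := hD.swap.exists_apply_eq hc hcw hx
  have hxy : c y ≠ c x := hzx ▸ (hc (hadj hz fun h => hc h hzx)).symm
  obtain ⟨c', hcc', hd', hcD⟩ := hD.swap.exists_isSwap_apply_eq hc hcw hd hx
    (by
      rintro _ (rfl | rfl) h
      exacts [absurd h hdx, hxy])
    (by
      rintro z - hzx _ (rfl | rfl) h
      exacts [absurd hzx (hc h), (hc (hadj hd hdx)).symm])
  exact ⟨c', hcc'.swapEquiv, (hcD hD.notMem_left.1).trans hd'.symm⟩

/-- The new colour of `w₂` is the colour of `x`, `y`, `w₁`, or else it is exchanged with the old one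
on `w₂` and on `D`, whose other outer neighbours `x`, `y`, `w₁` all have the same third colour. -/
theorem exists_isSwap_apply_ne [Finite V] (hreg : ∀ z, (G.neighborSet z).ncard = k)
    (hD : CliqueCut G k D x y w₁ w₂) (hc : IsProperColoring G k c) (hcxy : c x = c y)
    (hw₁ : c w₁ = c x) (hw₂ : c w₂ ≠ c x) (hcard : 2 ≤ (G.neighborSet w₂ ∩ D).ncard) :
    ∃ c', IsSwap G c c' ∧ c' w₂ ≠ c w₂ ∧ ∀ t ∉ D, t ≠ w₂ → c' t = c t := by
  obtain ⟨g, hg, hfree⟩ := exists_color_forall_notMem hreg hcard c (c w₂)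
  by_cases hgx : g = c x
  · refine ⟨Function.update c w₂ g, isSwap_update hc fun t ht => ?_, by simpa using hg,
      fun t _ ht => Function.update_of_ne ht _ _⟩
    by_cases htD : t ∈ D
    · exact hgx ▸ hD.apply_ne_of_mem hc hcxy htD
    · exact hfree t htD ht
  have hout {d : V} (hd : d ∈ D) (t : V) (ht : t ∉ D) (htw : t ∉ ({w₂} : Set V))
      (hdt : G.Adj d t) : c t = c x := by
    rcases hD.mem_pair_or_apply_eq hcxy hd hdt ht with (rfl | h) | h
    exacts [hw₁, absurd h htw, h]
  refine ⟨_, isSwap_swapOn_union (T := {w₂}) (D := D) (a := c w₂) (b := g) hc (by simp)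
    (by simpa using hfree)
    (fun d hd _ t ht htw hdt => (hout hd t ht htw hdt).trans_ne (Ne.symm hgx))
    (fun d hd _ t ht htw hdt => (hout hd t ht htw hdt).trans_ne hw₂.symm), ?_, fun t ht htw => ?_⟩
  · rwa [swapOn_of_mem (.inl rfl), Equiv.swap_apply_left]
  · refine swapOn_of_notMem ?_
    rintro (h | h)
    exacts [htw h, ht h.1]

end CliqueCut

end Recolour

section Contradiction

variable {k : ℕ} {G : SimpleGraph V} {α γ c : V → Fin k} {g : Fin k} {x y w₁ w₂ u v a d : V}
  {D : Set V}

namespace Conflict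

theorem left_ne_right (h : Conflict G α γ x y w₁ w₂ u v) : x ≠ w₁ :=
  h.disjoint.ne_of_mem (.inl rfl) (.inl rfl)

variable [Fintype V] (hreg : ∀ z, (G.neighborSet z).ncard = k) (h3 : ThreeConnected G)

include hreg h3

theorem apply_ne_of_adj_of_not_adj (h : Conflict G α γ x y w₁ w₂ u v)
    (hD : CliqueCut G k D x y w₁ w₂) (hx : γ x ≠ γ w₁) (ha : a ∈ D) (hax : G.Adj a x)
    (hαc : SwapEquiv G α c) (hd : d ∈ D) (hdx : ¬ G.Adj d x) : c x ≠ c d := by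
  obtain ⟨γ', hγ, hγ'⟩ := hD.exists_swapEquiv_apply_eq h.proper_right h.apply_right hx hd hdx
  have hxd : x ≠ d := fun hxd => hD.notMem_left.1 (hxd ▸ hd)
  have had : G.Adj a d := hD.isClique ha hd fun had => hdx (had ▸ hax)
  exact fun hc => h.false_of_apply_eq hreg h3 hαc hγ hxd hax had hc hγ'

theorem apply_ne_of_not_adj (h : Conflict G α γ x y w₁ w₂ u v)
    (hD : CliqueCut G k D x y w₁ w₂) (hγ : γ x ≠ γ w₁ ∧ γ y ≠ γ w₁)
    (hαc : SwapEquiv G α c) (hd : d ∈ D) (hdx : ¬ G.Adj d x) : c x ≠ c d := by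
  obtain ⟨a, ha, hay⟩ := hD.flip_left.exists_not_adj_left h.proper_right h.apply_right hγ.2
  exact h.apply_ne_of_adj_of_not_adj hreg h3 hD hγ.1 ha ((hD.adj_left ha).2 hay) hαc hd hdx

theorem adj_left_of_forall_ne (h : Conflict G α γ x y w₁ w₂ u v)
    (hD : CliqueCut G k D x y w₁ w₂) (hγ : γ x ≠ γ w₁ ∧ γ y ≠ γ w₁) (hd : d ∈ D)
    (hfree : ∀ t ∉ D, G.Adj x t → α t ≠ α d) : G.Adj d x := by
  by_contra hdx
  have hα := (isSwap_update_of_isClique h.proper_left hD.isClique hd hdx hfree).swapEquiv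
  have hdx' : d ≠ x := fun hdx => hD.notMem_left.1 (hdx ▸ hd)
  exact h.apply_ne_of_not_adj hreg h3 hD hγ hα hd hdx (by simp [hdx'])

/-- Otherwise `α x` and `α d` could be exchanged on `{x, d}`, making `y` and `d` alike. -/
theorem exists_adj_right_of_forall_ne (h : Conflict G α γ x y w₁ w₂ u v)
    (hD : CliqueCut G k D x y w₁ w₂) (hγ : γ x ≠ γ w₁ ∧ γ y ≠ γ w₁) (hd : d ∈ D)
    (hfree : ∀ t ∉ D, G.Adj x t → α t ≠ α d) :
    ∃ w ∈ ({w₁, w₂} : Set V), G.Adj d w ∧ α w = α x := by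
  by_contra! hw
  have hdy : ¬ G.Adj d y := (hD.adj_left hd).1 (h.adj_left_of_forall_ne hreg h3 hD hγ hd hfree)
  have hswap := isSwap_swapOn_union (T := {x}) (D := D) (a := α x) (b := α d) h.proper_left
    (by simp) (by simpa using hfree)
    (fun z hz hzx => absurd hzx (hD.apply_ne_of_mem h.proper_left h.apply_left hz))
    (fun z hz hzd t ht htx hzt => by
      obtain rfl := h.proper_left.injOn hD.isClique hz hd hzd
      rcases hD.mem_of_adj hz hzt with h' | h' | rfl | h' | h'
      exacts [absurd h' ht, absurd h' htx, absurd hzt hdy, hw t (.inl h') hzt,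
        hw t (.inr h') hzt])
  refine h.flip_left.apply_ne_of_not_adj hreg h3 hD.flip_left hγ.symm
    hswap.swapEquiv hd hdy ?_
  rw [swapOn_of_notMem, swapOn_of_mem (.inr ⟨hd, .inr rfl⟩), Equiv.swap_apply_right, h.apply_left]
  rintro (hyx | hyD)
  exacts [h.ne_left hyx.symm, hD.notMem_left.2 hyD.1]

theorem apply_right_eq_apply_left (hk : 4 ≤ k) (h : Conflict G α γ x y w₁ w₂ u v)
    (hD : CliqueCut G k D x y w₁ w₂) (hγ : γ x ≠ γ w₁ ∧ γ y ≠ γ w₁) :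
    α w₁ = α x ∨ α w₂ = α x := by
  wlog hcard : 2 ≤ (G.neighborSet x ∩ D).ncard generalizing x y
  · rw [h.apply_left]
    exact this h.flip_left hD.flip_left hγ.symm
      ((hD.two_le_ncard_or_two_le_ncard hk).resolve_left hcard)
  obtain ⟨g, hg, hfree⟩ := exists_color_forall_notMem hreg hcard α (α x)
  obtain ⟨d, hd, rfl⟩ := hD.exists_apply_eq h.proper_left h.apply_left hg
  obtain ⟨w, rfl | rfl, -, hw⟩ := h.exists_adj_right_of_forall_ne hreg h3 hD hγ hd hfree
  exacts [.inl hw, .inr hw]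

theorem apply_eq_and_adj_of_forall_ne (h : Conflict G α γ x y w₁ w₂ u v)
    (hD : CliqueCut G k D x y w₁ w₂) (hγ : γ x ≠ γ w₁ ∧ γ y ≠ γ w₁) (hw₁ : α w₁ = α x)
    (hg : g ≠ α x) (hfree : ∀ t ∉ D, G.Adj x t → α t ≠ g) :
    α w₂ = g ∧ ∀ b ∈ D, ¬ G.Adj b x → G.Adj b w₂ := by
  obtain ⟨d, hd, rfl⟩ := hD.exists_apply_eq h.proper_left h.apply_left hg
  have hw : α w₁ ≠ α w₂ := h.apply_ne hreg h3
  have hdw₂ : ¬ G.Adj d w₂ := by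
    obtain ⟨w, rfl | rfl, hdw, hwx⟩ := h.exists_adj_right_of_forall_ne hreg h3 hD hγ hd hfree
    exacts [(hD.adj_right hd).1 hdw, absurd (hw₁.trans hwx.symm) hw]
  have hb {b : V} (hb : b ∈ D) (hbx : ¬ G.Adj b x) : G.Adj b w₂ ∧ α w₂ = α d := by
    by_contra! hbw
    obtain ⟨c, hc, hcb, hcD⟩ := hD.exists_isSwap_apply_eq h.proper_left h.apply_left hb hg
      (by
        rintro w (rfl | rfl) hadj
        exacts [hw₁.trans_ne hg.symm, hbw hadj])
      (by
        rintro z hz hzd w (rfl | rfl) hadj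
        · exact hw₁.trans_ne (hD.apply_ne_of_mem h.proper_left h.apply_left hb).symm
        · exact absurd (h.proper_left.injOn hD.isClique hz hd hzd ▸ hadj) hdw₂)
    have hcxy : c x = c y := by rw [hcD hD.notMem_left.1, hcD hD.notMem_left.2, h.apply_left]
    refine hbx ((h.of_swapEquiv hc.swapEquiv hcxy).adj_left_of_forall_ne hreg h3 hD hγ hb ?_)
    exact fun t ht hxt => hcD ht ▸ hcb ▸ hfree t ht hxt
  obtain ⟨b, hbD, hbx⟩ := hD.exists_not_adj_left h.proper_right h.apply_right hγ.1
  exact ⟨(hb hbD hbx).2, fun b hbD hbx => (hb hbD hbx).1⟩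

/-- A third colour missing around `w₁` would be available for `w₁` after a change inside `D`. -/
theorem eq_apply_right_of_forall_ne (hk : 4 ≤ k) (h : Conflict G α γ x y w₁ w₂ u v)
    (hD : CliqueCut G k D x y w₁ w₂) (hγ : γ x ≠ γ w₁ ∧ γ y ≠ γ w₁) (hw₁ : α w₁ = α x)
    (hB : ∀ b ∈ D, ¬ G.Adj b x → G.Adj b w₂) (hg : g ≠ α x)
    (hfree : ∀ t ∉ D, G.Adj w₁ t → α t ≠ g) : g = α w₂ := by
  by_contra hgw
  have hw₂ : α w₂ ≠ α x := hw₁ ▸ (h.apply_ne hreg h3).symm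
  obtain ⟨b, hb, hbx⟩ := hD.exists_not_adj_left h.proper_right h.apply_right hγ.1
  have hbw₂ : G.Adj b w₂ := hB b hb hbx
  have hbw₁ : ¬ G.Adj b w₁ := fun hbw₁ => (hD.adj_right hb).1 hbw₁ hbw₂
  obtain ⟨c, hc, rfl, hcD⟩ := hD.exists_isSwap_apply_eq h.proper_left h.apply_left hb hg
    (by
      rintro w (rfl | rfl) hadj
      exacts [absurd hadj hbw₁, Ne.symm hgw])
    (by
      rintro z - - w (rfl | rfl) -
      exacts [hw₁.trans_ne (hD.apply_ne_of_mem h.proper_left h.apply_left hb).symm,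
        (h.proper_left hbw₂).symm])
  have hc' := isSwap_update_of_isClique hc.2.1 hD.isClique hb hbw₁
    fun t ht hwt => hcD ht ▸ hfree t ht hwt
  set c' := Function.update c w₁ (c b)
  have hcc' {t : V} (ht : t ∉ D) (htw : t ≠ w₁) : c' t = α t :=
    (Function.update_of_ne htw _ _).trans (hcD ht)
  have hx : c' x = α x := hcc' hD.notMem_left.1 h.left_ne_right
  have hy : c' y = α y := hcc' hD.notMem_left.2 h.flip_left.left_ne_right
  have h' := h.of_swapEquiv (hc.swapEquiv.trans hc'.swapEquiv) (by rw [hx, hy, h.apply_left])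
  rcases h'.apply_right_eq_apply_left hreg h3 hk hD hγ with hw | hw
  · exact hg ((Function.update_self w₁ (c b) c).symm.trans (hw.trans hx))
  · exact hw₂ (by rwa [hx, hcc' hD.notMem_right.2 h.ne_right.symm] at hw)

theorem false_of_forall_ne_of_forall_ne (h : Conflict G α γ x y w₁ w₂ u v)
    (hD : CliqueCut G k D x y w₁ w₂) (hγ : γ x ≠ γ w₁ ∧ γ y ≠ γ w₁) (hw₁ : α w₁ = α x)
    (hw₂ : α w₂ ≠ α x) (hfree : ∀ s ∈ ({x, w₁} : Set V), ∀ t ∉ D, G.Adj s t → α t ≠ α w₂) :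
    False := by
  obtain ⟨z, hz, hzw₂⟩ := hD.exists_apply_eq h.proper_left h.apply_left hw₂
  have hzy : ¬ G.Adj z y := (hD.adj_left hz).1
    (h.adj_left_of_forall_ne hreg h3 hD hγ hz (hzw₂ ▸ hfree x (.inl rfl)))
  have hswap := isSwap_swapOn_union (T := {x, w₁}) (D := D) (a := α x) (b := α w₂) h.proper_left
    (by simpa using hw₁) hfree
    (fun d hd hdx => absurd hdx (hD.apply_ne_of_mem h.proper_left h.apply_left hd))
    (fun d hd hdw t ht htT hdt => by
      obtain rfl := h.proper_left.injOn hD.isClique hd hz (hdw.trans hzw₂.symm)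
      rcases hD.mem_of_adj hd hdt with h' | rfl | rfl | rfl | rfl
      exacts [absurd h' ht, absurd (.inl rfl) htT, absurd hdt hzy, absurd (.inr rfl) htT, hw₂])
  refine h.false_of_apply_eq hreg h3 hswap.swapEquiv .refl h.ne_right h.adj_right.1 h.adj_right.2
    ?_ h.apply_right
  rw [swapOn_of_mem (.inl (.inr rfl)), hw₁, Equiv.swap_apply_left, swapOn_of_notMem]
  rintro ((hw | hw) | hw)
  exacts [h.flip_right.left_ne_right hw.symm, h.ne_right hw.symm, hD.notMem_right.2 hw.1]

theorem exists_conflict_apply_ne (h : Conflict G α γ x y w₁ w₂ u v)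
    (hD : CliqueCut G k D x y w₁ w₂) (hα : α w₁ = α x)
    (hcard : 2 ≤ (G.neighborSet w₂ ∩ D).ncard) :
    ∃ c, Conflict G c γ x y w₁ w₂ u v ∧ c w₁ = c x ∧ c x = α x ∧ c w₂ ≠ α w₂ ∧
      ∀ t ∉ D, α t ≠ α w₂ → c t ≠ α w₂ := by
  have hw₂ : α w₂ ≠ α x := hα ▸ (h.apply_ne hreg h3).symm
  obtain ⟨c, hc, hcw₂, hcD⟩ :=
    hD.exists_isSwap_apply_ne hreg h.proper_left h.apply_left hα hw₂ hcard
  have hx : c x = α x := hcD x hD.notMem_left.1 h.flip_right.left_ne_right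
  have hy : c y = α y := hcD y hD.notMem_left.2 h.flip_left.flip_right.left_ne_right
  have hw₁ : c w₁ = α w₁ := hcD w₁ hD.notMem_right.1 h.ne_right
  refine ⟨c, h.of_swapEquiv hc.swapEquiv ?_, hw₁.trans (hα.trans hx.symm), hx, hcw₂,
    fun t ht htw => ?_⟩
  · rw [hx, hy, h.apply_left]
  · rwa [hcD t ht fun h => htw (congrArg α h)]

theorem apply_right_ne_apply_left (hk : 4 ≤ k) (h : Conflict G α γ x y w₁ w₂ u v)
    (hD : CliqueCut G k D x y w₁ w₂) (hγ : γ x ≠ γ w₁ ∧ γ y ≠ γ w₁) : α w₁ ≠ α x := by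
  intro hw₁
  wlog hcard : 2 ≤ (G.neighborSet x ∩ D).ncard generalizing x y
  · exact this h.flip_left hD.flip_left hγ.symm (hw₁.trans h.apply_left)
      ((hD.two_le_ncard_or_two_le_ncard hk).resolve_left hcard)
  have hw₂ : α w₂ ≠ α x := hw₁ ▸ (h.apply_ne hreg h3).symm
  obtain ⟨g, hg, hfree⟩ := exists_color_forall_notMem hreg hcard α (α x)
  obtain ⟨rfl, hB⟩ := h.apply_eq_and_adj_of_forall_ne hreg h3 hD hγ hw₁ hg hfree
  rcases hD.swap.two_le_ncard_or_two_le_ncard hk with hcard₁ | hcard₂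
  · obtain ⟨g, hg, hfree₁⟩ := exists_color_forall_notMem hreg hcard₁ α (α x)
    obtain rfl := h.eq_apply_right_of_forall_ne hreg h3 hk hD hγ hw₁ hB hg hfree₁
    refine h.false_of_forall_ne_of_forall_ne hreg h3 hD hγ hw₁ hw₂ ?_
    rintro s (rfl | rfl)
    exacts [hfree, hfree₁]
  · obtain ⟨c, h', hcw₁, hcx, hcw₂, hc⟩ := h.exists_conflict_apply_ne hreg h3 hD hw₁ hcard₂
    exact hcw₂ (h'.apply_eq_and_adj_of_forall_ne hreg h3 hD hγ hcw₁ (hcx ▸ hg)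
      fun t ht hxt => hc t ht (hfree t ht hxt)).1

theorem apply_left_eq_apply_right (hk : 4 ≤ k) (h : Conflict G α γ x y w₁ w₂ u v)
    (hD : CliqueCut G k D x y w₁ w₂) : γ x = γ w₁ ∨ γ y = γ w₁ := by
  by_contra! hγ
  rcases h.apply_right_eq_apply_left hreg h3 hk hD hγ with hw | hw
  · exact h.apply_right_ne_apply_left hreg h3 hk hD hγ hw
  · exact h.flip_right.apply_right_ne_apply_left hreg h3 hk hD.flip_right
      (h.apply_right ▸ hγ) hw

theorem not_adj_and_adj (h : Conflict G α γ x y w₁ w₂ u v) (hα : α w₁ = α x) (hγ : γ x = γ w₁) :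
    ¬ (G.Adj d x ∧ G.Adj d w₁) :=
  fun hd => h.false_of_apply_eq hreg h3 .refl .refl h.left_ne_right hd.1 hd.2 hα.symm hγ

theorem exists_adj_of_apply_eq (h : Conflict G α γ x y w₁ w₂ u v)
    (hD : CliqueCut G k D x y w₁ w₂) (hα : α w₁ = α x) (hγ : γ x = γ w₁) :
    ∃ a ∈ D, G.Adj a y ∧ ¬ G.Adj a x ∧ G.Adj a w₁ ∧ ¬ G.Adj a w₂ := by
  have hw₂ : α w₂ ≠ α x := hα ▸ (h.apply_ne hreg h3).symm
  obtain ⟨a, ha, haw₂⟩ :=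
    hD.swap.flip_left.exists_not_adj_left h.proper_left h.apply_left hw₂
  have haw₁ : G.Adj a w₁ := (hD.adj_right ha).2 haw₂
  have hax : ¬ G.Adj a x := fun hax => h.not_adj_and_adj hreg h3 hα hγ ⟨hax, haw₁⟩
  exact ⟨a, ha, (hD.flip_left.adj_left ha).2 hax, hax, haw₁, haw₂⟩

theorem apply_ne_of_apply_eq (h : Conflict G α γ x y w₁ w₂ u v)
    (hD : CliqueCut G k D x y w₁ w₂) (hα : α w₁ = α x) (hγ : γ x = γ w₁)
    (hαc : SwapEquiv G α c) (hd : d ∈ D) (hdy : ¬ G.Adj d y) : c y ≠ c d := by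
  have hy : γ y ≠ γ w₁ := hγ ▸ (h.swap.apply_ne hreg h3).symm
  obtain ⟨a, ha, hay, -⟩ := h.exists_adj_of_apply_eq hreg h3 hD hα hγ
  exact h.flip_left.apply_ne_of_adj_of_not_adj hreg h3 hD.flip_left hy ha hay hαc hd hdy

theorem exists_isSwap_of_apply_eq (h : Conflict G α γ x y w₁ w₂ u v)
    (hD : CliqueCut G k D x y w₁ w₂) (hα : α w₁ = α x) (hγ : γ x = γ w₁) (hg : g ≠ α x)
    (hgw : g ≠ α w₂) : ∃ a ∈ D, (G.Adj a x ∧ ¬ G.Adj a y ∧ G.Adj a w₂ ∧ ¬ G.Adj a w₁) ∧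
      ∃ c, IsSwap G α c ∧ c a = g ∧ Set.EqOn c α Dᶜ := by
  obtain ⟨a, ha, haw₂, haw₁, hax, hay⟩ := h.swap.exists_adj_of_apply_eq hreg h3 hD.swap hγ hα
  refine ⟨a, ha, ⟨hax, hay, haw₂, haw₁⟩,
    hD.exists_isSwap_apply_eq h.proper_left h.apply_left ha hg ?_ ?_⟩
  · rintro w (rfl | rfl) haw
    exacts [absurd haw haw₁, hgw.symm]
  · rintro z - - w (rfl | rfl) -
    exacts [hα.trans_ne (hD.apply_ne_of_mem h.proper_left h.apply_left ha).symm,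
      (h.proper_left haw₂).symm]

theorem exists_adj_left_apply_eq (h : Conflict G α γ x y w₁ w₂ u v)
    (hD : CliqueCut G k D x y w₁ w₂) (hα : α w₁ = α x) (hγ : γ x = γ w₁) :
    ∃ t ∉ D, G.Adj x t ∧ α t = α w₂ := by
  by_contra! hfree
  have hc : IsSwap G α (Function.update α x (α w₂)) :=
    isSwap_update h.proper_left fun t hxt => by
      by_cases ht : t ∈ D
      · have htw₁ : ¬ G.Adj t w₁ := fun htw => h.not_adj_and_adj hreg h3 hα hγ ⟨hxt.symm, htw⟩
        exact h.proper_left ((hD.flip_right.adj_right ht).2 htw₁)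
      · exact hfree t ht hxt
  have hxw₂ : x ≠ w₂ := h.flip_right.left_ne_right
  obtain ⟨a, -, haw₂, -, hax, -⟩ := h.swap.exists_adj_of_apply_eq hreg h3 hD.swap hγ hα
  exact h.false_of_apply_eq hreg h3 hc.swapEquiv .refl hxw₂ hax haw₂ (by simp [hxw₂.symm])
    (hγ.trans h.apply_right)

theorem ncard_left_lt_two (h : Conflict G α γ x y w₁ w₂ u v)
    (hD : CliqueCut G k D x y w₁ w₂) (hα : α w₁ = α x) (hγ : γ x = γ w₁) :
    (G.neighborSet x ∩ D).ncard < 2 := by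
  by_contra! hcard
  obtain ⟨g, hg, hfree⟩ := exists_color_forall_notMem hreg hcard α (α x)
  have hgw : g ≠ α w₂ := by
    rintro rfl
    obtain ⟨t, ht, hxt, htw⟩ := h.exists_adj_left_apply_eq hreg h3 hD hα hγ
    exact hfree t ht hxt htw
  obtain ⟨a, ha, ⟨-, hay, -, haw₁⟩, c, hc, rfl, hcD⟩ :=
    h.exists_isSwap_of_apply_eq hreg h3 hD hα hγ hg hgw
  have hcx : c x = α x := hcD hD.notMem_left.1
  have hcy : c y = α y := hcD hD.notMem_left.2
  have hcxy : c x = c y := by rw [hcx, hcy, h.apply_left]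
  have hc' := isSwap_swapOn_union (T := {x}) (D := D) (a := c x) (b := c a) hc.2.1 (by simp)
    (by
      rintro s rfl t ht hst
      exact hcD ht ▸ hfree t ht hst)
    (fun d hd hdx => absurd hdx (hD.apply_ne_of_mem hc.2.1 hcxy hd))
    (fun d hd hda t ht htx hdt => by
      obtain rfl := hc.2.1.injOn hD.isClique hd ha hda
      rcases hD.mem_of_adj hd hdt with h' | rfl | rfl | rfl | rfl
      · exact absurd h' ht
      · exact absurd rfl htx
      · exact absurd hdt hay
      · exact absurd hdt haw₁
      · rw [hcx, hcD ht, ← hα]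
        exact (h.apply_ne hreg h3).symm)
  refine h.apply_ne_of_apply_eq hreg h3 hD hα hγ (hc.swapEquiv.trans hc'.swapEquiv) ha hay ?_
  rw [swapOn_of_notMem, swapOn_of_mem (.inr ⟨ha, .inr rfl⟩), Equiv.swap_apply_right, hcxy]
  rintro (hyx | hyD)
  exacts [h.ne_left hyx.symm, hD.notMem_left.2 hyD.1]

theorem eq_apply_right_of_apply_eq_of_forall_ne (h : Conflict G α γ x y w₁ w₂ u v)
    (hD : CliqueCut G k D x y w₁ w₂) (hα : α w₁ = α x) (hγ : γ x = γ w₁) (hg : g ≠ α x)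
    (hfree : ∀ t ∉ D, G.Adj y t → α t ≠ g) : g = α w₂ := by
  by_contra hgw
  obtain ⟨a, ha, ⟨-, hay, -, -⟩, c, hc, rfl, hcD⟩ :=
    h.exists_isSwap_of_apply_eq hreg h3 hD hα hγ hg hgw
  have hc' := isSwap_update_of_isClique hc.2.1 hD.isClique ha hay
    fun t ht hyt => hcD ht ▸ hfree t ht hyt
  have hay' : a ≠ y := fun hay => hD.notMem_left.2 (hay ▸ ha)
  exact h.apply_ne_of_apply_eq hreg h3 hD hα hγ (hc.swapEquiv.trans hc'.swapEquiv) ha hay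
    (by simp [hay'])

theorem apply_left_ne_apply_right (hk : 4 ≤ k) (h : Conflict G α γ x y w₁ w₂ u v)
    (hD : CliqueCut G k D x y w₁ w₂) (hα : α w₁ = α x) : γ x ≠ γ w₁ := by
  intro hγ
  have hcard := (hD.two_le_ncard_or_two_le_ncard hk).resolve_left
    (h.ncard_left_lt_two hreg h3 hD hα hγ).not_ge
  have hcard₂ := (hD.swap.two_le_ncard_or_two_le_ncard hk).resolve_left
    (h.swap.ncard_left_lt_two hreg h3 hD.swap hγ hα).not_ge
  obtain ⟨g, hg, hfree⟩ := exists_color_forall_notMem hreg hcard α (α x)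
  obtain rfl := h.eq_apply_right_of_apply_eq_of_forall_ne hreg h3 hD hα hγ hg hfree
  obtain ⟨c, h', hcw₁, hcx, hcw₂, hc⟩ := h.exists_conflict_apply_ne hreg h3 hD hα hcard₂
  exact hcw₂ (h'.eq_apply_right_of_apply_eq_of_forall_ne hreg h3 hD hcw₁ hγ (hcx ▸ hg)
    fun t ht hyt => hc t ht (hfree t ht hyt)).symm

theorem false_of_cliqueCut (hk : 4 ≤ k) (h : Conflict G α γ x y w₁ w₂ u v)
    (hD : CliqueCut G k D x y w₁ w₂) : False := by
  wlog hα : α w₁ = α x generalizing w₁ w₂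
  · exact this h.flip_right hD.flip_right
      ((h.swap.apply_left_eq_apply_right hreg h3 hk hD.swap).resolve_left hα)
  rcases h.apply_left_eq_apply_right hreg h3 hk hD with hγ | hγ
  · exact h.apply_left_ne_apply_right hreg h3 hk hD hα hγ
  · exact h.flip_left.apply_left_ne_apply_right hreg h3 hk hD.flip_left (hα.trans h.apply_left) hγ

end Conflict

theorem not_conflict [Fintype V] (hreg : ∀ z, (G.neighborSet z).ncard = k)
    (h3 : ThreeConnected G) (hk : 4 ≤ k) : ¬ Conflict G α γ x y w₁ w₂ u v := fun h =>
  let ⟨_, _, _, _, _, _, _, _, _, h', hD⟩ := h.exists_cliqueCut hreg h3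
  h'.false_of_cliqueCut hreg h3 hk hD

theorem IsProperColoring.exists_apply_eq [Finite V] (hreg : ∀ z, (G.neighborSet z).ncard = k)
    (hα : IsProperColoring G k α) (u : V) :
    ∃ x y, x ≠ y ∧ (G.Adj u x ∧ G.Adj u y) ∧ α x = α y := by
  by_contra! h
  have hinj : Set.InjOn α (G.neighborSet u) := fun x hx y hy hxy =>
    by_contra fun hne => h x y hne ⟨hx, hy⟩ hxy
  have huniv : α '' G.neighborSet u = Set.univ :=
    (Set.eq_univ_iff_ncard _).2 (by rw [hinj.ncard_image, hreg, Nat.card_fin])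
  obtain ⟨x, hx, hux⟩ := huniv.ge (Set.mem_univ (α u))
  exact hα hx hux.symm

end Contradiction

/-- for `k ≥ 4` and a 3-connected `k`-regular graph `G`, if `u` and `v`
are non-adjacent and `v` has two non-adjacent neighbours `w1, w2` neither adjacent to
`u`, then the proper `k`-colourings of `G` form a single Kempe class. -/
theorem stmt11 {V : Type*} [Fintype V] (k : ℕ) (hk : 4 ≤ k) (G : SimpleGraph V)
    [DecidableRel G.Adj] (hreg : G.IsRegularOfDegree k) (h3c : ThreeConnected G)
    (u v : V) (hune : u ≠ v) (huv : ¬ G.Adj u v)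
    (w1 w2 : V) (hw1 : G.Adj v w1) (hw2 : G.Adj v w2)
    (hwne : w1 ≠ w2) (hwnadj : ¬ G.Adj w1 w2)
    (hw1u : ¬ G.Adj u w1) (hw2u : ¬ G.Adj u w2) :
    KempeClass G k := by
  have hncard (z : V) : (G.neighborSet z).ncard = k := by
    rw [← Nat.card_coe_set_eq, Nat.card_eq_fintype_card, G.card_neighborSet_eq_degree, hreg z]
  obtain ⟨γ, hγ, hγw⟩ := exists_isProperColoring_apply_eq hncard h3c hwne hwnadj hw1 hw2
  have hequiv (α : V → Fin k) (hα : IsProperColoring G k α) : SwapEquiv G α γ := by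
    by_contra hαγ
    obtain ⟨x, y, hxy, hux, hαxy⟩ := hα.exists_apply_eq hncard u
    have hnotMem {z : V} (hz : ¬ G.Adj u z) : z ∉ ({x, y} : Set V) := by
      rintro (rfl | rfl)
      exacts [hz hux.1, hz hux.2]
    refine not_conflict hncard h3c hk (v := v) ⟨hxy, hwne, hux, ⟨hw1, hw2⟩, hnotMem huv, ?_,
      Set.disjoint_right.2 ?_, hα, hγ, hαxy, hγw, hαγ⟩
    · rintro (rfl | rfl)
      exacts [huv hw1.symm, huv hw2.symm]
    · rintro _ (rfl | rfl)
      exacts [hnotMem hw1u, hnotMem hw2u]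
  exact fun c c' hc hc' => ((hequiv c hc).trans (hequiv c' hc').symm).kempeEquiv
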